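/- arXiv:2304.00255 — 2 statements merged into one kernel-verified Lean document; each statement's English description precedes it below -/
import Mathlib

section
/- Let G be a forest. Then reg(I(G)^{[k]}) = aim(G,k) + k for all 1 ≤ k ≤ ν(G), where aim(G,k) is the k-admissible matching number. -/
open scoped Classical

noncomputable section

/-- `M` is a matching of `G`: a set of edges of `G` that are pairwise vertex-disjoint. -/
def IsMatchingSet {V : Type*} (G : SimpleGraph V) (M : Finset (Sym2 V)) : Prop :=
  (∀ e ∈ M, e ∈ G.edgeSet) ∧
    ∀ e ∈ M, ∀ f ∈ M, e ≠ f → ∀ v : V, v ∈ e → v ∉ f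

/-- The matching number `ν(G)`: the maximum size of a matching of `G`. -/
def matchingNumber {V : Type*} [Fintype V] (G : SimpleGraph V) : ℕ :=
  sSup {k | ∃ M : Finset (Sym2 V), IsMatchingSet G M ∧ M.card = k}

/-- Two edges `e, f` form a gap in `G`: they are vertex-disjoint and no edge of `G`
joins an endpoint of `e` to an endpoint of `f` (an induced matching of size 2). -/
def IsGap {V : Type*} (G : SimpleGraph V) (e f : Sym2 V) : Prop :=
  (∀ v : V, v ∈ e → v ∉ f) ∧ ∀ u v : V, u ∈ e → v ∈ f → ¬ G.Adj u v

/-- The set of vertices covered by a set of edges `M`. -/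
def matchVerts {V : Type*} (M : Finset (Sym2 V)) : Set V := {v | ∃ e ∈ M, v ∈ e}

/-- `M` is a `k`-admissible matching of `G`: a matching admitting a partition into
nonempty parts `M₁, …, M_r` such that edges from distinct parts form gaps in `G`,
`|M₁| + ⋯ + |M_r| ≤ r + k - 1`, and the induced subgraph on the vertices of each
part is a forest. -/
def IsAdmissibleMatching {V : Type*} (G : SimpleGraph V) (k : ℕ)
    (M : Finset (Sym2 V)) : Prop :=
  IsMatchingSet G M ∧
    ∃ P : Finset (Finset (Sym2 V)),
      (∀ p ∈ P, p.Nonempty) ∧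
      (∀ p ∈ P, ∀ q ∈ P, p ≠ q → Disjoint p q) ∧
      P.biUnion id = M ∧
      (∀ p ∈ P, ∀ q ∈ P, p ≠ q → ∀ e ∈ p, ∀ f ∈ q, IsGap G e f) ∧
      M.card + 1 ≤ P.card + k ∧
      ∀ p ∈ P, (SimpleGraph.induce (matchVerts p) G).IsAcyclic

/-- The `k`-admissible matching number `aim(G,k)`: the maximum size of a
`k`-admissible matching of `G` (`0` if none exists). -/
def aim {V : Type*} [Fintype V] (G : SimpleGraph V) (k : ℕ) : ℕ :=
  sSup {m | ∃ M : Finset (Sym2 V), IsAdmissibleMatching G k M ∧ M.card = m}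


open MvPolynomial

/-- The `k`-th squarefree power `I(G)^{[k]}` of the edge ideal of a graph `G` on
`Fin n`: the ideal generated by the monomials `x_{V(M)}` over all `k`-matchings `M`. -/
def edgeIdealSqPow (K : Type*) [Field K] {n : ℕ} (G : SimpleGraph (Fin n)) (k : ℕ) :
    Ideal (MvPolynomial (Fin n) K) :=
  Ideal.span {f | ∃ M : Finset (Sym2 (Fin n)), IsMatchingSet G M ∧ M.card = k ∧
    f = ∏ v ∈ Finset.univ.filter (fun v => ∃ e ∈ M, v ∈ e), X v}

/-- A graded free resolution of a homogeneous ideal `J` of `S = K[x_1,…,x_n]`: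
free modules `F i = S^{rk i}` with basis elements of degrees `deg i`, degree-preserving
differentials given on basis elements by homogeneous coordinates, an augmentation onto
a homogeneous generating set of `J`, and exactness. -/
structure GradedFreeResolution {K : Type*} [Field K] {n : ℕ}
    (J : Ideal (MvPolynomial (Fin n) K)) where
  rk : ℕ → ℕ
  deg : (i : ℕ) → Fin (rk i) → ℕ
  gen : Fin (rk 0) → MvPolynomial (Fin n) K
  gen_mem : ∀ p, gen p ∈ J
  gen_hom : ∀ p, (gen p).IsHomogeneous (deg 0 p)
  gen_span : Ideal.span (Set.range gen) = J
  d : (i : ℕ) →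
    ((Fin (rk (i + 1)) → MvPolynomial (Fin n) K) →ₗ[MvPolynomial (Fin n) K]
      (Fin (rk i) → MvPolynomial (Fin n) K))
  d_graded : ∀ (i : ℕ) (q : Fin (rk (i + 1))) (p : Fin (rk i)),
    d i (Pi.single q 1) p ≠ 0 →
      deg i p ≤ deg (i + 1) q ∧
        (d i (Pi.single q 1) p).IsHomogeneous (deg (i + 1) q - deg i p)
  aug : (Fin (rk 0) → MvPolynomial (Fin n) K) →ₗ[MvPolynomial (Fin n) K]
    MvPolynomial (Fin n) K
  aug_apply : ∀ v, aug v = ∑ p, v p * gen p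
  exact_zero : LinearMap.range (d 0) = LinearMap.ker aug
  exact_succ : ∀ i, LinearMap.range (d (i + 1)) = LinearMap.ker (d i)

/-- The Castelnuovo–Mumford regularity of a homogeneous ideal `J`: the least `r` such
that `J` admits a graded free resolution with all `i`-th syzygies generated in degrees
at most `r + i` (attained by the minimal graded free resolution). -/
def reg {K : Type*} [Field K] {n : ℕ} (J : Ideal (MvPolynomial (Fin n) K)) : ℕ :=
  sInf {r | ∃ F : GradedFreeResolution J, ∀ (i : ℕ) (p : Fin (F.rk i)), F.deg i p ≤ r + i}

/-!
Upper bound. A monomial ideal is `J + u L`, where `J` is generated by the monomials free of `u` and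
`L ⊇ J` is its colon by `u`, and a mapping cone gives `reg ≤ max (reg J) (reg L + 1)`. In a forest
choose a vertex `u` adjacent to a leaf `v`, all of whose neighbours except at most one vertex `w`
are leaves. Splitting along `u`, and then the colon ideal along the neighbours of `u`, leads to
`k`-th or `(k - 1)`-st squarefree powers of smaller forests, and adding the edge `uv` to their
admissible matchings controls the admissible matching numbers.

Lower bound. An admissible matching `M` with `#M + 1 ≤ m + k` admits a colouring of the vertices
`V(M)` with `m` colours in which adjacent vertices have the same colour; recolouring, we may take
`#M + 1 = m + k`. Remove one vertex of each colour from `V(M)`. The product `g` of the remaining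
variables has degree `2 #M - m = #M + k - 1`, and it is multiplied into the ideal by each of the `m`
removed variables `y`, as putting one vertex back destroys only `m - 1` edges of `M`. If
`reg < #M + k`, then lifting `g` along a graded resolution and setting all variables of a colour
equal to the removed one and those outside `V(M)` to zero puts the image of `g` into the image of
the ideal: the lift at step `m` has positive degree, so this specialization sends it into `(y)`,
and `y` is a regular sequence. Hence some `k`-matching uses fewer vertices of each colour than `M`;
both numbers being even, it misses two of each colour, so `k + m ≤ #M`, a contradiction.
-/

namespace SquarefreePower

section GradedFree

variable {σ K ι κ μ : Type*} [CommRing K]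

/-- The degree `D` part of the graded free module `⨁ₚ S(-deg p)` over `S = K[σ]`: vectors whose
`p`-th coordinate is homogeneous of degree `D - deg p`, and zero if `D < deg p`. -/
def gradedPart (deg : ι → ℕ) (D : ℕ) : Submodule K (ι → MvPolynomial σ K) :=
  Submodule.pi Set.univ fun p =>
    if deg p ≤ D then homogeneousSubmodule σ K (D - deg p) else ⊥

theorem mem_gradedPart {deg : ι → ℕ} {D : ℕ} {v : ι → MvPolynomial σ K} :
    v ∈ gradedPart deg D ↔ ∀ p, v p ≠ 0 → deg p ≤ D ∧ (v p).IsHomogeneous (D - deg p) := by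
  simp only [gradedPart, Submodule.mem_pi, Set.mem_univ, forall_const]
  refine forall_congr' fun p => ?_
  by_cases h : deg p ≤ D
  · simp only [h, if_true, mem_homogeneousSubmodule, true_and]
    exact ⟨fun hp _ => hp, fun hp => (eq_or_ne (v p) 0).elim
      (fun h0 => h0 ▸ isHomogeneous_zero _ _ _) hp⟩
  · simp [h]

theorem gradedPart_apply_eq_zero {deg : ι → ℕ} {D : ℕ} {v : ι → MvPolynomial σ K}
    (hv : v ∈ gradedPart deg D) {p : ι} (hp : D < deg p) : v p = 0 :=
  by_contra fun h => hp.not_ge (mem_gradedPart.1 hv p h).1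

theorem isHomogeneous_of_mem_gradedPart {deg : ι → ℕ} {D : ℕ} {v : ι → MvPolynomial σ K}
    (hv : v ∈ gradedPart deg D) (p : ι) : (v p).IsHomogeneous (D - deg p) := by
  by_cases h : v p = 0
  · exact h ▸ isHomogeneous_zero _ _ _
  · exact (mem_gradedPart.1 hv p h).2

theorem smul_mem_gradedPart {deg : ι → ℕ} {D e : ℕ} {a : MvPolynomial σ K}
    {v : ι → MvPolynomial σ K} (ha : a.IsHomogeneous e) (hv : v ∈ gradedPart deg D) :
    a • v ∈ gradedPart deg (e + D) := by
  refine mem_gradedPart.2 fun p hp => ?_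
  obtain ⟨hle, hom⟩ := mem_gradedPart.1 hv p (right_ne_zero_of_mul hp)
  exact ⟨hle.trans (Nat.le_add_left D e), Nat.add_sub_assoc hle e ▸ ha.mul hom⟩

theorem single_mem_gradedPart [DecidableEq ι] (deg : ι → ℕ) {e : ℕ} {a : MvPolynomial σ K}
    (ha : a.IsHomogeneous e) (q : ι) : Pi.single q a ∈ gradedPart deg (e + deg q) := by
  refine mem_gradedPart.2 fun p hp => ?_
  obtain rfl : p = q := by_contra fun h => hp (by simp [h])
  simpa using ha

theorem gradedPart_add_right (deg : ι → ℕ) (D e : ℕ) :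
    gradedPart (σ := σ) (K := K) (fun p => deg p + e) (D + e) = gradedPart deg D := by
  ext v
  simp [mem_gradedPart, Nat.add_sub_add_right]

theorem mem_gradedPart_sum {d₁ : ι → ℕ} {d₂ : κ → ℕ} {D : ℕ} {v : ι ⊕ κ → MvPolynomial σ K} :
    v ∈ gradedPart (Sum.elim d₁ d₂) D ↔
      v ∘ Sum.inl ∈ gradedPart d₁ D ∧ v ∘ Sum.inr ∈ gradedPart d₂ D := by
  simp [mem_gradedPart]

/-- The projection of a graded free module onto its degree `D` part. -/
def gradedProj (deg : ι → ℕ) (D : ℕ) :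
    (ι → MvPolynomial σ K) →ₗ[K] (ι → MvPolynomial σ K) :=
  LinearMap.pi fun p =>
    if deg p ≤ D then homogeneousComponent (D - deg p) ∘ₗ LinearMap.proj p else 0

theorem gradedProj_apply (deg : ι → ℕ) (D : ℕ) (v : ι → MvPolynomial σ K) (p : ι) :
    gradedProj deg D v p = if deg p ≤ D then homogeneousComponent (D - deg p) (v p) else 0 := by
  simp only [gradedProj, LinearMap.pi_apply]
  split_ifs <;> rfl

theorem gradedProj_mem (deg : ι → ℕ) (D : ℕ) (v : ι → MvPolynomial σ K) :
    gradedProj deg D v ∈ gradedPart deg D := by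
  refine mem_gradedPart.2 fun p hp => ?_
  rw [gradedProj_apply] at hp ⊢
  split_ifs at hp ⊢ with h
  · exact ⟨h, homogeneousComponent_isHomogeneous _ _⟩
  · exact absurd rfl hp

theorem gradedProj_of_mem {deg : ι → ℕ} {D : ℕ} {v : ι → MvPolynomial σ K}
    (hv : v ∈ gradedPart deg D) (E : ℕ) : gradedProj deg E v = if E = D then v else 0 := by
  funext p
  rw [gradedProj_apply]
  by_cases hp : v p = 0
  · split_ifs <;> simp [hp]
  obtain ⟨hle, hom⟩ := mem_gradedPart.1 hv p hp
  rcases eq_or_ne E D with rfl | hE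
  · rw [if_pos hle, if_pos rfl, homogeneousComponent_eq_self hom]
  · rw [if_neg hE]
    split_ifs with hle'
    · rw [homogeneousComponent_of_mem ((mem_homogeneousSubmodule _ _).2 hom), if_neg (by omega)]
      rfl
    · rfl

/-- A homomorphism of graded free modules that preserves degrees. -/
def IsGradedMap (dι : ι → ℕ) (dκ : κ → ℕ)
    (f : (ι → MvPolynomial σ K) →ₗ[MvPolynomial σ K] (κ → MvPolynomial σ K)) : Prop :=
  ∀ ⦃D v⦄, v ∈ gradedPart dι D → f v ∈ gradedPart dκ D

variable {dι : ι → ℕ} {dκ : κ → ℕ} {dμ : μ → ℕ}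
  {f : (ι → MvPolynomial σ K) →ₗ[MvPolynomial σ K] (κ → MvPolynomial σ K)}

theorem IsGradedMap.add_right (hf : IsGradedMap dι dκ f) (e : ℕ) :
    IsGradedMap (fun p => dι p + e) (fun p => dκ p + e) f := by
  intro D v hv
  rcases le_or_gt e D with h | h
  · obtain ⟨D, rfl⟩ := Nat.exists_eq_add_of_le' h
    rw [gradedPart_add_right] at hv ⊢
    exact hf hv
  · obtain rfl : v = 0 := funext fun p => gradedPart_apply_eq_zero hv (Nat.lt_add_left _ h)
    simp

theorem IsGradedMap.smul_apply_mem (hf : IsGradedMap dι dκ f) {x : MvPolynomial σ K}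
    (hx : x.IsHomogeneous 1) {D : ℕ} {v : ι → MvPolynomial σ K}
    (hv : v ∈ gradedPart (fun p => dι p + 1) D) : x • f v ∈ gradedPart dκ D := by
  rcases D with - | D
  · obtain rfl : v = 0 := funext fun p => gradedPart_apply_eq_zero hv (Nat.succ_pos _)
    simp
  · rw [gradedPart_add_right] at hv
    rw [add_comm D 1]
    exact smul_mem_gradedPart hx (hf hv)

section Finite

theorem map_eq_sum_single [Fintype ι] [DecidableEq ι] {R M : Type*} [CommRing R] [AddCommGroup M]
    [Module R M] (g : (ι → R) →ₗ[R] M) (v : ι → R) : g v = ∑ q, v q • g (Pi.single q 1) := by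
  conv_lhs => rw [← Finset.univ_sum_single v, map_sum]
  simp [← map_smul, ← Pi.single_smul]

variable [Finite ι]

theorem isGradedMap_iff_single [DecidableEq ι] :
    IsGradedMap dι dκ f ↔ ∀ q, f (Pi.single q 1) ∈ gradedPart dκ (dι q) := by
  refine ⟨fun hf q => hf (by simpa using single_mem_gradedPart dι (isHomogeneous_one σ K) q),
    fun h D v hv => ?_⟩
  cases nonempty_fintype ι
  rw [map_eq_sum_single]
  refine Submodule.sum_mem _ fun q _ => ?_
  by_cases hq : v q = 0
  · simp [hq]
  obtain ⟨hle, hom⟩ := mem_gradedPart.1 hv q hq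
  simpa [Nat.sub_add_cancel hle] using smul_mem_gradedPart hom (h q)

theorem IsGradedMap.map_gradedProj (hf : IsGradedMap dι dκ f) (D : ℕ)
    (v : ι → MvPolynomial σ K) : f (gradedProj dι D v) = gradedProj dκ D (f v) := by
  have on_single : ∀ (q : ι) (a : MvPolynomial σ K),
      f (gradedProj dι D (Pi.single q a)) = gradedProj dκ D (f (Pi.single q a)) := by
    intro q a
    induction a using MvPolynomial.induction_on' with
    | monomial m c =>
      have hm : Pi.single q (monomial m c) ∈ gradedPart dι (m.degree + dι q) :=
        single_mem_gradedPart dι (isHomogeneous_monomial c rfl) q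
      rw [gradedProj_of_mem hm, gradedProj_of_mem (hf hm), apply_ite f, map_zero]
    | add a b ha hb => simp only [Pi.single_add, map_add, ha, hb]
  cases nonempty_fintype ι
  rw [← Finset.univ_sum_single v]
  simp only [map_sum, on_single]

theorem IsGradedMap.exists_homogeneous_preimage (hf : IsGradedMap dι dκ f) {D : ℕ}
    {u : κ → MvPolynomial σ K} (hu : u ∈ gradedPart dκ D) (h : u ∈ LinearMap.range f) :
    ∃ v ∈ gradedPart dι D, f v = u := by
  obtain ⟨v, rfl⟩ := h
  exact ⟨gradedProj dι D v, gradedProj_mem _ _ _, by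
    rw [hf.map_gradedProj, gradedProj_of_mem hu, if_pos rfl]⟩

theorem IsGradedMap.exists_lift [Finite μ]
    {g : (μ → MvPolynomial σ K) →ₗ[MvPolynomial σ K] (κ → MvPolynomial σ K)}
    (hf : IsGradedMap dι dκ f) (hg : IsGradedMap dμ dκ g)
    (h : LinearMap.range f ≤ LinearMap.range g) :
    ∃ φ : (ι → MvPolynomial σ K) →ₗ[MvPolynomial σ K] (μ → MvPolynomial σ K),
      IsGradedMap dι dμ φ ∧ g ∘ₗ φ = f := by
  have lift_basis : ∀ q, ∃ w ∈ gradedPart dμ (dι q), g w = f (Pi.single q 1) := fun q =>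
    hg.exists_homogeneous_preimage (isGradedMap_iff_single.1 hf q) (h ⟨_, rfl⟩)
  choose w hw hgw using lift_basis
  cases nonempty_fintype ι
  refine ⟨Fintype.linearCombination _ w, isGradedMap_iff_single.2 fun q => ?_, ?_⟩
  · simpa using hw q
  · ext1 q
    ext1
    simp [hgw]

end Finite

end GradedFree

section Resolution

/-- The family `κ, ι 0, ι 1, …` of basis index types of a complex extended by one term. -/
abbrev prepend (κ : Type) (ι : ℕ → Type) : ℕ → Type
  | 0 => κ
  | i + 1 => ι i

instance {κ : Type} {ι : ℕ → Type} [Fintype κ] [∀ i, Fintype (ι i)] :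
    ∀ i, Fintype (prepend κ ι i)
  | 0 => ‹Fintype κ›
  | i + 1 => inferInstanceAs (Fintype (ι i))

/-- The basis degrees that go with `prepend κ ι`. -/
def prependDeg {κ : Type} {ι : ℕ → Type} (degκ : κ → ℕ) (deg : ∀ i, ι i → ℕ) :
    ∀ i, prepend κ ι i → ℕ
  | 0 => degκ
  | i + 1 => deg i

variable {σ K : Type*} [CommRing K] {J L : Ideal (MvPolynomial σ K)} {x : MvPolynomial σ K}

/-- A graded free resolution `⋯ → F₁ → F₀ → S` of `S / J` with finite free modules, stripped of
its last term `S`: the map `d i` goes from `Fᵢ` to `Fᵢ₋₁`, where `F₋₁ = S` is indexed by `Unit`. -/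
structure Resolution (J : Ideal (MvPolynomial σ K)) where
  ι : ℕ → Type
  [fintype : ∀ i, Fintype (ι i)]
  deg : ∀ i, ι i → ℕ
  d : ∀ i, (ι i → MvPolynomial σ K) →ₗ[MvPolynomial σ K] (prepend Unit ι i → MvPolynomial σ K)
  isGradedMap_d : ∀ i, IsGradedMap (deg i) (prependDeg (fun _ => 0) deg i) (d i)
  mem_range_d_zero : ∀ v, v ∈ LinearMap.range (d 0) ↔ v () ∈ J
  exact : ∀ i, LinearMap.range (d (i + 1)) = LinearMap.ker (d i)

attribute [instance] Resolution.fintype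

/-- The ideal `J` has regularity at most `r`. -/
def RegLE (J : Ideal (MvPolynomial σ K)) (r : ℕ) : Prop :=
  ∃ F : Resolution J, ∀ i p, F.deg i p ≤ r + i

namespace Resolution

theorem d_d (F : Resolution J) (i : ℕ) (v : F.ι (i + 1) → MvPolynomial σ K) :
    F.d i (F.d (i + 1) v) = 0 :=
  LinearMap.mem_ker.1 (F.exact i ▸ LinearMap.mem_range_self _ v)

theorem exists_of_d_eq_zero (F : Resolution J) {i : ℕ} {v : F.ι i → MvPolynomial σ K}
    (hv : F.d i v = 0) : ∃ w, F.d (i + 1) w = v :=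
  (F.exact i).ge (LinearMap.mem_ker.2 hv)

end Resolution

/-- A graded chain map `F → E` that lifts the identity of `S`, hence the inclusion `J ≤ L`. -/
structure IsChainLift (F : Resolution J) (E : Resolution L)
    (φ : ∀ i, (prepend Unit F.ι i → MvPolynomial σ K) →ₗ[MvPolynomial σ K]
      (prepend Unit E.ι i → MvPolynomial σ K)) : Prop where
  map_zero : φ 0 = LinearMap.id
  isGradedMap : ∀ i, IsGradedMap (prependDeg (fun _ => 0) F.deg i)
    (prependDeg (fun _ => 0) E.deg i) (φ i)
  comm : ∀ i, E.d i ∘ₗ φ (i + 1) = φ i ∘ₗ F.d i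

theorem exists_isChainLift (F : Resolution J) (E : Resolution L) (hJL : J ≤ L) :
    ∃ φ, IsChainLift F E φ := by
  let Liftable (i : ℕ) (f : (prepend Unit F.ι i → MvPolynomial σ K) →ₗ[MvPolynomial σ K]
      (prepend Unit E.ι i → MvPolynomial σ K)) : Prop :=
    IsGradedMap (prependDeg (fun _ => 0) F.deg i) (prependDeg (fun _ => 0) E.deg i) f ∧
      LinearMap.range (f ∘ₗ F.d i) ≤ LinearMap.range (E.d i)
  have liftable_id : Liftable 0 LinearMap.id := by
    refine ⟨fun D v hv => hv, ?_⟩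
    rintro _ ⟨v, rfl⟩
    exact (E.mem_range_d_zero _).2 (hJL ((F.mem_range_d_zero _).1 ⟨v, rfl⟩))
  have lift : ∀ i f, Liftable i f → ∃ g, Liftable (i + 1) g ∧ E.d i ∘ₗ g = f ∘ₗ F.d i := by
    rintro i f ⟨hf, hrange⟩
    obtain ⟨g, hg, hgf⟩ := IsGradedMap.exists_lift (f := f ∘ₗ F.d i)
      (fun D v hv => hf (F.isGradedMap_d i hv)) (E.isGradedMap_d i) hrange
    refine ⟨g, ⟨hg, ?_⟩, hgf⟩
    rw [E.exact]
    rintro _ ⟨v, rfl⟩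
    simpa [F.d_d] using LinearMap.congr_fun hgf (F.d (i + 1) v)
  choose! next liftable_next next_comm using lift
  let φ (i : ℕ) : {f // Liftable i f} :=
    Nat.rec ⟨LinearMap.id, liftable_id⟩
      (fun i f => ⟨next i f, liftable_next i f f.2⟩) i
  exact ⟨fun i => (φ i).1, rfl, fun i => (φ i).2.1, fun i => next_comm i _ (φ i).2⟩

theorem regLE_bot (r : ℕ) : RegLE (⊥ : Ideal (MvPolynomial σ K)) r :=
  ⟨{ ι := fun _ => Empty
     deg := fun _ => Empty.elim
     d := fun _ => 0
     isGradedMap_d := fun _ _ _ _ => Submodule.zero_mem _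
     mem_range_d_zero := fun v => by
       simpa [eq_comm] using (funext_iff (f := v) (g := 0)).trans (Unique.forall_iff (α := Unit))
     exact := fun i => Subsingleton.elim _ _ }, fun _ => Empty.rec⟩

theorem regLE_top (r : ℕ) : RegLE (⊤ : Ideal (MvPolynomial σ K)) r :=
  ⟨{ ι := prepend Unit fun _ => Empty
     deg := prependDeg (fun _ => 0) fun _ => Empty.elim
     d := fun i => match i with
       | 0 => LinearMap.id
       | _ + 1 => 0
     isGradedMap_d := fun i => match i with
       | 0 => fun _ _ hv => hv
       | _ + 1 => fun _ _ _ => Submodule.zero_mem _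
     mem_range_d_zero := fun v => by simp
     exact := fun i => match i with
       | 0 => by simp [LinearMap.ker_id]
       | _ + 1 => Subsingleton.elim _ _ },
    fun i => match i with
      | 0 => fun _ => Nat.zero_le _
      | _ + 1 => Empty.rec⟩

/-- The homomorphism into a free module on `α ⊕ β` with given components. -/
def sumLift {R M α β : Type*} [CommRing R] [AddCommGroup M] [Module R M]
    (f : M →ₗ[R] (α → R)) (g : M →ₗ[R] (β → R)) : M →ₗ[R] (α ⊕ β → R) :=
  (LinearEquiv.sumArrowLequivProdArrow α β R R).symm ∘ₗ f.prod g

@[simp]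
theorem sumLift_apply {R M α β : Type*} [CommRing R] [AddCommGroup M] [Module R M]
    (f : M →ₗ[R] (α → R)) (g : M →ₗ[R] (β → R)) (m : M) :
    sumLift f g m = Sum.elim (f m) (g m) :=
  rfl

section Cone

variable (F : Resolution J) (E : Resolution L)
  (φ : ∀ i, (prepend Unit F.ι i → MvPolynomial σ K) →ₗ[MvPolynomial σ K]
    (prepend Unit E.ι i → MvPolynomial σ K))
  (x : MvPolynomial σ K)

/-- Index type of the basis of the `i`-th module `Fᵢ₋₁(-1) ⊕ Fᵢ ⊕ Eᵢ(-1)` of the mapping cone. -/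
abbrev coneIdx (i : ℕ) : Type :=
  prepend Empty F.ι i ⊕ F.ι i ⊕ E.ι i

/-- The degrees of the basis of the mapping cone; the shifts `(-1)` are by the degree of `x`. -/
def coneDeg (i : ℕ) : coneIdx F E i → ℕ :=
  Sum.elim (fun p => prependDeg Empty.elim F.deg i p + 1)
    (Sum.elim (F.deg i) fun p => E.deg i p + 1)

/-- The differential of `F` with its last map `F₀ → S` replaced by zero. -/
def truncD : ∀ i, (F.ι i → MvPolynomial σ K) →ₗ[MvPolynomial σ K]
    (prepend Empty F.ι i → MvPolynomial σ K)
  | 0 => 0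
  | i + 1 => F.d (i + 1)

/-- The differential `(a, b, c) ↦ (-d a, d b + x a, d c - φ a)` of the mapping cone, where `φ` lifts
the inclusion `J ≤ L`; in degree zero it is `(b, c) ↦ d b + x d c`. -/
def coneD : ∀ i, (coneIdx F E i → MvPolynomial σ K) →ₗ[MvPolynomial σ K]
    (prepend Unit (coneIdx F E) i → MvPolynomial σ K)
  | 0 =>
    let b := LinearMap.funLeft (MvPolynomial σ K) (MvPolynomial σ K) (Sum.inr ∘ Sum.inl)
    let c := LinearMap.funLeft (MvPolynomial σ K) (MvPolynomial σ K) (Sum.inr ∘ Sum.inr)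
    F.d 0 ∘ₗ b + x • E.d 0 ∘ₗ c
  | i + 1 =>
    let a := LinearMap.funLeft (MvPolynomial σ K) (MvPolynomial σ K) Sum.inl
    let b := LinearMap.funLeft (MvPolynomial σ K) (MvPolynomial σ K) (Sum.inr ∘ Sum.inl)
    let c := LinearMap.funLeft (MvPolynomial σ K) (MvPolynomial σ K) (Sum.inr ∘ Sum.inr)
    sumLift (-(truncD F i ∘ₗ a))
      (sumLift (F.d (i + 1) ∘ₗ b + x • a) (E.d (i + 1) ∘ₗ c - φ (i + 1) ∘ₗ a))

variable {F E φ x}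

theorem coneD_zero_elim (b : F.ι 0 → MvPolynomial σ K) (c : E.ι 0 → MvPolynomial σ K)
    (a : Empty → MvPolynomial σ K) :
    coneD F E φ x 0 (Sum.elim a (Sum.elim b c)) = F.d 0 b + x • E.d 0 c :=
  rfl

theorem coneD_succ_elim {i : ℕ} (a : F.ι i → MvPolynomial σ K)
    (b : F.ι (i + 1) → MvPolynomial σ K) (c : E.ι (i + 1) → MvPolynomial σ K) :
    coneD F E φ x (i + 1) (Sum.elim a (Sum.elim b c)) =
      Sum.elim (-truncD F i a)
        (Sum.elim (F.d (i + 1) b + x • a) (E.d (i + 1) c - φ (i + 1) a)) :=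
  rfl

theorem exists_eq_sumElim {R α β γ : Type*} (v : α ⊕ β ⊕ γ → R) :
    ∃ a b c, v = Sum.elim a (Sum.elim b c) :=
  ⟨v ∘ Sum.inl, v ∘ Sum.inr ∘ Sum.inl, v ∘ Sum.inr ∘ Sum.inr, by ext (_ | _ | _) <;> rfl⟩

theorem mem_range_d_of_smul_mem (hx : IsSMulRegular (MvPolynomial σ K) x)
    (hcolon : ∀ a, x * a ∈ J → a ∈ J) :
    ∀ {i} {a : prepend Unit F.ι i → MvPolynomial σ K},
      x • a ∈ LinearMap.range (F.d i) → a ∈ LinearMap.range (F.d i)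
  | 0, a, h => (F.mem_range_d_zero a).2 (hcolon _ ((F.mem_range_d_zero _).1 h))
  | i + 1, a, h => by
    rw [F.exact, LinearMap.mem_ker, map_smul] at h
    rw [F.exact, LinearMap.mem_ker]
    exact (IsSMulRegular.pi fun _ => hx).right_eq_zero_of_smul h

theorem coneD_coneD (hφ : IsChainLift F E φ) : ∀ i (v : coneIdx F E (i + 1) → MvPolynomial σ K),
    coneD F E φ x i (coneD F E φ x (i + 1) v) = 0
  | 0, v => by
    obtain ⟨a, b, c, rfl⟩ := exists_eq_sumElim v
    have hcomm := LinearMap.congr_fun (hφ.comm 0) a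
    simp only [LinearMap.comp_apply, hφ.map_zero, LinearMap.id_apply] at hcomm
    rw [coneD_succ_elim, coneD_zero_elim]
    simp only [map_add, map_sub, map_smul, F.d_d, E.d_d, hcomm]
    module
  | i + 1, v => by
    obtain ⟨a, b, c, rfl⟩ := exists_eq_sumElim v
    have hcomm := LinearMap.congr_fun (hφ.comm (i + 1)) a
    simp only [LinearMap.comp_apply] at hcomm
    have htrunc : truncD F i (truncD F (i + 1) a) = 0 := by
      cases i with
      | zero => rfl
      | succ i => exact F.d_d _ _
    rw [coneD_succ_elim, coneD_succ_elim]
    simp only [map_add, map_sub, map_smul, map_neg, F.d_d, E.d_d, hcomm, htrunc]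
    ext (p | p | p) <;> simp [truncD]

theorem exists_cone_preimage (hφ : IsChainLift F E φ) (hx : IsSMulRegular (MvPolynomial σ K) x)
    (hcolon : ∀ a, x * a ∈ J → a ∈ J) {i : ℕ} {a : prepend Unit F.ι i → MvPolynomial σ K}
    {b : F.ι i → MvPolynomial σ K} {c : E.ι i → MvPolynomial σ K}
    (hb : F.d i b + x • a = 0) (hc : E.d i c = φ i a) :
    ∃ a' b' c', F.d i a' = -a ∧ F.d (i + 1) b' + x • a' = b ∧
      E.d (i + 1) c' - φ (i + 1) a' = c := by
  obtain ⟨a', ha'⟩ : -a ∈ LinearMap.range (F.d i) :=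
    mem_range_d_of_smul_mem hx hcolon ⟨b, by rw [smul_neg, eq_neg_iff_add_eq_zero, hb]⟩
  obtain ⟨b', hb'⟩ := F.exists_of_d_eq_zero (v := b - x • a') (by
    rw [map_sub, map_smul, ha', smul_neg, sub_neg_eq_add, hb])
  obtain ⟨c', hc'⟩ := E.exists_of_d_eq_zero (v := c + φ (i + 1) a') (by
    rw [map_add, hc, ← LinearMap.comp_apply (E.d i), hφ.comm, LinearMap.comp_apply, ha', map_neg,
      add_neg_cancel])
  exact ⟨a', b', c', ha', by rw [hb', sub_add_cancel], by rw [hc', add_sub_cancel_right]⟩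

theorem exists_of_coneD_eq_zero (hφ : IsChainLift F E φ)
    (hx : IsSMulRegular (MvPolynomial σ K) x) (hcolon : ∀ a, x * a ∈ J → a ∈ J) :
    ∀ {i} {v : coneIdx F E i → MvPolynomial σ K}, coneD F E φ x i v = 0 →
      ∃ w, coneD F E φ x (i + 1) w = v
  | 0, v, hv => by
    obtain ⟨a, b, c, rfl⟩ := exists_eq_sumElim v
    rw [coneD_zero_elim] at hv
    obtain ⟨a', b', c', -, rfl, rfl⟩ :=
      exists_cone_preimage hφ hx hcolon hv (by rw [hφ.map_zero, LinearMap.id_apply])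
    exact ⟨Sum.elim a' (Sum.elim b' c'), (coneD_succ_elim a' b' c').trans (by congr; ext ⟨⟩)⟩
  | i + 1, v, hv => by
    obtain ⟨a, b, c, rfl⟩ := exists_eq_sumElim v
    rw [coneD_succ_elim] at hv
    have hb : F.d (i + 1) b + x • a = 0 := congr_arg (fun w => w ∘ Sum.inr ∘ Sum.inl) hv
    have hc : E.d (i + 1) c - φ (i + 1) a = 0 := congr_arg (fun w => w ∘ Sum.inr ∘ Sum.inr) hv
    obtain ⟨a', b', c', ha', rfl, rfl⟩ :=
      exists_cone_preimage hφ hx hcolon hb (sub_eq_zero.1 hc)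
    refine ⟨Sum.elim a' (Sum.elim b' c'), ?_⟩
    rw [coneD_succ_elim, truncD, ha', neg_neg]

theorem isGradedMap_truncD : ∀ i, IsGradedMap (F.deg i) (prependDeg Empty.elim F.deg i) (truncD F i)
  | 0 => fun _ _ _ => Submodule.zero_mem _
  | i + 1 => F.isGradedMap_d (i + 1)

theorem isGradedMap_coneD (hφ : IsChainLift F E φ) (hx : x.IsHomogeneous 1) :
    ∀ i, IsGradedMap (coneDeg F E i) (prependDeg (fun _ => 0) (coneDeg F E) i) (coneD F E φ x i)
  | 0 => by
    intro D v hv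
    obtain ⟨a, b, c, rfl⟩ := exists_eq_sumElim v
    obtain ⟨-, hb, hc⟩ := by simpa only [coneDeg, mem_gradedPart_sum] using hv
    rw [coneD_zero_elim]
    exact Submodule.add_mem _ (F.isGradedMap_d 0 hb) ((E.isGradedMap_d 0).smul_apply_mem hx hc)
  | i + 1 => by
    intro D v hv
    obtain ⟨a, b, c, rfl⟩ := exists_eq_sumElim v
    obtain ⟨ha, hb, hc⟩ := by simpa only [coneDeg, mem_gradedPart_sum] using hv
    rw [coneD_succ_elim]
    refine mem_gradedPart_sum.2 ⟨Submodule.neg_mem _ ?_,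
      mem_gradedPart_sum.2 ⟨Submodule.add_mem _ (F.isGradedMap_d (i + 1) hb) ?_,
        Submodule.sub_mem _ ((E.isGradedMap_d (i + 1)).add_right 1 hc) ?_⟩⟩
    · exact (isGradedMap_truncD i).add_right 1 ha
    · exact IsGradedMap.smul_apply_mem (f := .id) (fun _ _ => id) hx ha
    · exact (hφ.isGradedMap (i + 1)).add_right 1 ha

theorem range_coneD_succ (hφ : IsChainLift F E φ) (hx : IsSMulRegular (MvPolynomial σ K) x)
    (hcolon : ∀ a, x * a ∈ J → a ∈ J) (i : ℕ) :
    LinearMap.range (coneD F E φ x (i + 1)) = LinearMap.ker (coneD F E φ x i) := by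
  ext v
  exact ⟨fun ⟨w, hw⟩ => hw ▸ coneD_coneD hφ i w, exists_of_coneD_eq_zero hφ hx hcolon⟩

theorem mem_range_coneD_zero {v : Unit → MvPolynomial σ K} :
    v ∈ LinearMap.range (coneD F E φ x 0) ↔ v () ∈ J ⊔ Ideal.span {x} * L := by
  rw [Submodule.mem_sup]
  constructor
  · rintro ⟨w, rfl⟩
    obtain ⟨a, b, c, rfl⟩ := exists_eq_sumElim w
    exact ⟨_, (F.mem_range_d_zero _).1 ⟨b, rfl⟩, _,
      Ideal.mem_span_singleton_mul.2 ⟨_, (E.mem_range_d_zero _).1 ⟨c, rfl⟩, rfl⟩, rfl⟩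
  · rintro ⟨j, hj, _, hxl, hv⟩
    obtain ⟨l, hl, rfl⟩ := Ideal.mem_span_singleton_mul.1 hxl
    obtain ⟨b, hb⟩ := (F.mem_range_d_zero fun _ => j).2 hj
    obtain ⟨c, hc⟩ := (E.mem_range_d_zero fun _ => l).2 hl
    refine ⟨Sum.elim Empty.elim (Sum.elim b c), ?_⟩
    rw [coneD_zero_elim, hb, hc]
    exact funext fun _ => hv

end Cone

theorem RegLE.sup_span_singleton_mul {r : ℕ} (hJ : RegLE J (r + 1)) (hL : RegLE L r)
    (hJL : J ≤ L) (hx : IsSMulRegular (MvPolynomial σ K) x) (hhom : x.IsHomogeneous 1)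
    (hcolon : ∀ a, x * a ∈ J → a ∈ J) : RegLE (J ⊔ Ideal.span {x} * L) (r + 1) := by
  obtain ⟨F, hF⟩ := hJ
  obtain ⟨E, hE⟩ := hL
  obtain ⟨φ, hφ⟩ := exists_isChainLift F E hJL
  refine ⟨{ ι := coneIdx F E
            deg := coneDeg F E
            d := coneD F E φ x
            isGradedMap_d := isGradedMap_coneD hφ hhom
            mem_range_d_zero := fun _ => mem_range_coneD_zero
            exact := range_coneD_succ hφ hx hcolon }, ?_⟩
  rintro i (p | p | p)
  · cases i with
    | zero => exact p.elim
    | succ i => exact Nat.succ_le_succ (hF i p)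
  · exact hF i p
  · exact (Nat.succ_le_succ (hE i p)).trans_eq (Nat.add_right_comm r i 1)

end Resolution

section Regularity

variable {K : Type*} [Field K] {n : ℕ} {J : Ideal (MvPolynomial (Fin n) K)}

/-- A graded free resolution of an ideal, in the format of `Resolution`. -/
def Resolution.ofGradedFreeResolution (F : GradedFreeResolution J) : Resolution J where
  ι i := Fin (F.rk i)
  deg := F.deg
  d
    | 0 => LinearMap.pi fun _ => F.aug
    | i + 1 => F.d i
  isGradedMap_d
    | 0 => by
      refine isGradedMap_iff_single.2 fun q => mem_gradedPart.2 fun _ _ => ⟨Nat.zero_le _, ?_⟩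
      simpa [F.aug_apply, Pi.single_apply, prependDeg] using F.gen_hom q
    | i + 1 => isGradedMap_iff_single.2 fun q => mem_gradedPart.2 (F.d_graded i q)
  mem_range_d_zero v := by
    have hspan : v () ∈ J ↔ v () ∈ Ideal.span (Set.range F.gen) := by rw [F.gen_span]
    rw [hspan, ← Ideal.submodule_span_eq, Submodule.mem_span_range_iff_exists_fun]
    simp only [LinearMap.mem_range, LinearMap.pi_apply, funext_iff, F.aug_apply, smul_eq_mul]
    exact exists_congr fun _ => Unique.forall_iff (α := Unit)
  exact
    | 0 => by rw [F.exact_zero, LinearMap.ker_pi, iInf_const]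
    | i + 1 => F.exact_succ i

/-- The reindexing of the `i`-th free module of a resolution by an initial segment of `ℕ`. -/
def Resolution.coord (F : Resolution J) (i : ℕ) :
    (Fin (Fintype.card (F.ι i)) → MvPolynomial (Fin n) K) ≃ₗ[MvPolynomial (Fin n) K]
      (F.ι i → MvPolynomial (Fin n) K) :=
  LinearEquiv.funCongrLeft _ _ (Fintype.equivFin (F.ι i))

theorem Resolution.coord_single (F : Resolution J) (i : ℕ) (p : Fin (Fintype.card (F.ι i))) :
    F.coord i (Pi.single p 1) = Pi.single ((Fintype.equivFin (F.ι i)).symm p) 1 := by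
  ext q
  simp [coord, Pi.single_apply, Equiv.eq_symm_apply]

/-- The differential `F.d (i + 1)` in the coordinates `F.coord`. -/
def Resolution.reindexD (F : Resolution J) (i : ℕ) :
    (Fin (Fintype.card (F.ι (i + 1))) → MvPolynomial (Fin n) K) →ₗ[MvPolynomial (Fin n) K]
      (Fin (Fintype.card (F.ι i)) → MvPolynomial (Fin n) K) :=
  (F.coord i).symm.toLinearMap ∘ₗ F.d (i + 1) ∘ₗ (F.coord (i + 1)).toLinearMap

theorem Resolution.mem_range_reindexD (F : Resolution J) {i : ℕ}
    {v : Fin (Fintype.card (F.ι i)) → MvPolynomial (Fin n) K} :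
    v ∈ LinearMap.range (F.reindexD i) ↔ F.d i (F.coord i v) = 0 := by
  rw [← LinearMap.mem_ker, ← F.exact]
  constructor
  · rintro ⟨w, rfl⟩
    exact ⟨F.coord (i + 1) w, by simp [reindexD]⟩
  · rintro ⟨w, hw⟩
    exact ⟨(F.coord (i + 1)).symm w, by simp [reindexD, hw]⟩

/-- A resolution in the format of `GradedFreeResolution`, obtained by reindexing all bases. -/
def Resolution.toGradedFreeResolution (F : Resolution J) : GradedFreeResolution J :=
  let aug := LinearMap.proj () ∘ₗ F.d 0 ∘ₗ (F.coord 0).toLinearMap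
  have aug_apply : ∀ v, aug v = ∑ p, v p * aug (Pi.single p 1) := map_eq_sum_single aug
  have mem_range_aug : ∀ a, a ∈ LinearMap.range aug ↔ a ∈ J := fun a => by
    rw [← F.mem_range_d_zero fun _ => a]
    exact ⟨fun ⟨v, hv⟩ => ⟨F.coord 0 v, funext fun _ => hv⟩,
      fun ⟨w, hw⟩ => ⟨(F.coord 0).symm w, by simp [aug, hw]⟩⟩
  { rk := fun i => Fintype.card (F.ι i)
    deg := fun i p => F.deg i ((Fintype.equivFin (F.ι i)).symm p)
    gen := fun p => aug (Pi.single p 1)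
    gen_mem := fun p => (mem_range_aug _).1 ⟨_, rfl⟩
    gen_hom := fun p => by
      simp only [aug, LinearMap.comp_apply, LinearEquiv.coe_coe, F.coord_single]
      exact isHomogeneous_of_mem_gradedPart (isGradedMap_iff_single.1 (F.isGradedMap_d 0) _) ()
    gen_span := by
      ext a
      rw [← mem_range_aug, ← Ideal.submodule_span_eq, Submodule.mem_span_range_iff_exists_fun]
      exact exists_congr fun v => by rw [aug_apply v]; rfl
    d := F.reindexD
    d_graded := fun i q p hp => by
      simp only [reindexD, LinearMap.comp_apply, LinearEquiv.coe_coe, F.coord_single] at hp ⊢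
      exact mem_gradedPart.1 (isGradedMap_iff_single.1 (F.isGradedMap_d (i + 1)) _) _ hp
    aug := aug
    aug_apply := aug_apply
    exact_zero := by
      ext v
      rw [F.mem_range_reindexD]
      exact ⟨fun h => congr_fun h (), fun h => funext fun _ => h⟩
    exact_succ := fun i => by
      ext v
      rw [F.mem_range_reindexD]
      exact (LinearEquiv.map_eq_zero_iff (F.coord i).symm).symm }

theorem regLE_iff_exists_gradedFreeResolution {r : ℕ} :
    RegLE J r ↔ ∃ F : GradedFreeResolution J, ∀ i p, F.deg i p ≤ r + i :=
  ⟨fun ⟨F, hF⟩ => ⟨F.toGradedFreeResolution, fun i _ => hF i _⟩,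
    fun ⟨F, hF⟩ => ⟨.ofGradedFreeResolution F, hF⟩⟩

theorem reg_eq_of_regLE {r : ℕ} (hr : RegLE J r) (hmin : ∀ s, RegLE J s → r ≤ s) : reg J = r := by
  simp only [reg, ← regLE_iff_exists_gradedFreeResolution]
  exact le_antisymm (Nat.sInf_le hr) (le_csInf ⟨r, hr⟩ hmin)

end Regularity

section SquarefreeIdeal

variable {σ : Type*} (K : Type*) [CommRing K]

/-- The squarefree monomial ideal generated by the monomials `∏ v ∈ A, X v` with `A ∈ Q`. -/
def squarefreeIdeal (Q : Set (Finset σ)) : Ideal (MvPolynomial σ K) :=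
  Ideal.span ((fun A => ∏ v ∈ A, X v) '' Q)

variable {K} {Q Q' : Set (Finset σ)}

theorem prod_X_mem_squarefreeIdeal {A : Finset σ} (hA : A ∈ Q) :
    ∏ v ∈ A, X v ∈ squarefreeIdeal K Q :=
  Ideal.subset_span ⟨A, hA, rfl⟩

theorem squarefreeIdeal_mono (h : Q ⊆ Q') : squarefreeIdeal K Q ≤ squarefreeIdeal K Q' :=
  Ideal.span_mono (Set.image_mono h)

theorem sum_single_one_le_iff {A : Finset σ} {m : σ →₀ ℕ} :
    ∑ v ∈ A, Finsupp.single v 1 ≤ m ↔ A ⊆ m.support := by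
  have sum_apply (w : σ) : (∑ v ∈ A, Finsupp.single v 1) w = if w ∈ A then 1 else 0 := by
    simp [Finsupp.finsetSum_apply, Finsupp.single_apply]
  simp only [Finsupp.le_def, sum_apply, Finset.subset_iff, Finsupp.mem_support_iff]
  refine forall_congr' fun v => ?_
  split_ifs with hv <;> simp [hv, Nat.one_le_iff_ne_zero]

theorem mem_squarefreeIdeal_iff_exists_subset {f : MvPolynomial σ K} :
    f ∈ squarefreeIdeal K Q ↔ ∀ m ∈ f.support, ∃ A ∈ Q, A ⊆ m.support := by
  have himage : (fun A => ∏ v ∈ A, X v : Finset σ → MvPolynomial σ K) '' Q =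
      (fun m => monomial m 1) '' ((fun A => ∑ v ∈ A, Finsupp.single v 1) '' Q) := by
    rw [Set.image_image]
    exact Set.image_congr fun A _ => (monomial_sum_one _ _).symm
  rw [squarefreeIdeal, himage, mem_ideal_span_monomial_image]
  simp only [Set.exists_mem_image, sum_single_one_le_iff]

theorem mem_squarefreeIdeal (hQ : IsUpperSet Q) {f : MvPolynomial σ K} :
    f ∈ squarefreeIdeal K Q ↔ ∀ m ∈ f.support, m.support ∈ Q :=
  mem_squarefreeIdeal_iff_exists_subset.trans <| forall₂_congr fun _ _ =>
    ⟨fun ⟨_, hA, hAm⟩ => hQ hAm hA, fun hm => ⟨_, hm, subset_rfl⟩⟩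

theorem support_single_add (u : σ) (m : σ →₀ ℕ) :
    (Finsupp.single u 1 + m).support = insert u m.support := by
  ext v
  by_cases hv : v = u <;> simp [hv, Ne.symm]

theorem X_mul_mem_squarefreeIdeal (hQ : IsUpperSet Q) {u : σ} {f : MvPolynomial σ K} :
    X u * f ∈ squarefreeIdeal K Q ↔ f ∈ squarefreeIdeal K {A | insert u A ∈ Q} := by
  have hlink : IsUpperSet {A | insert u A ∈ Q} := fun _ _ h => hQ (Finset.insert_subset_insert u h)
  simp [mem_squarefreeIdeal hQ, mem_squarefreeIdeal hlink, support_X_mul, support_single_add]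

theorem squarefreeIdeal_eq_sup (hQ : IsUpperSet Q) (u : σ) :
    squarefreeIdeal K Q = squarefreeIdeal K {A | A.erase u ∈ Q} ⊔
      Ideal.span {X u} * squarefreeIdeal K {A | insert u A ∈ Q} := by
  refine le_antisymm (Ideal.span_le.2 ?_) (sup_le
    (squarefreeIdeal_mono fun A hA => hQ (Finset.erase_subset u A) hA)
    (Ideal.span_singleton_mul_le_iff.2 fun _ => (X_mul_mem_squarefreeIdeal hQ).2))
  rw [Set.image_subset_iff]
  intro A hA
  rw [Set.mem_preimage]
  by_cases hu : u ∈ A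
  · rw [← Finset.mul_prod_erase A _ hu]
    refine Ideal.mem_sup_right (Ideal.mul_mem_mul (Ideal.mem_span_singleton_self _)
      (prod_X_mem_squarefreeIdeal ?_))
    simpa [Finset.insert_erase hu] using hA
  · refine Ideal.mem_sup_left (prod_X_mem_squarefreeIdeal ?_)
    simpa [Finset.erase_eq_of_notMem hu] using hA

theorem regLE_squarefreeIdeal_of_deletion_of_link (hQ : IsUpperSet Q) (u : σ) {r : ℕ}
    (hdel : RegLE (squarefreeIdeal K {A | A.erase u ∈ Q}) (r + 1))
    (hlink : RegLE (squarefreeIdeal K {A | insert u A ∈ Q}) r) :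
    RegLE (squarefreeIdeal K Q) (r + 1) := by
  have hdel_upper : IsUpperSet {A : Finset σ | A.erase u ∈ Q} :=
    fun _ _ h => hQ (Finset.erase_subset_erase u h)
  rw [squarefreeIdeal_eq_sup hQ u]
  refine hdel.sup_span_singleton_mul hlink (squarefreeIdeal_mono fun A hA =>
    hQ ((Finset.erase_subset u A).trans (Finset.subset_insert u A)) hA)
    isRegular_X.left.isSMulRegular (isHomogeneous_X K u) fun f hf => ?_
  simpa [X_mul_mem_squarefreeIdeal hdel_upper, Finset.erase_insert_eq_erase] using hf

theorem regLE_squarefreeIdeal_of_eq_empty (hQ : Q = ∅) (r : ℕ) :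
    RegLE (squarefreeIdeal K Q) r := by
  have hbot : squarefreeIdeal K Q = ⊥ := by simp [squarefreeIdeal, hQ]
  exact hbot ▸ regLE_bot r

theorem regLE_squarefreeIdeal_of_empty_mem (hQ : ∅ ∈ Q) (r : ℕ) :
    RegLE (squarefreeIdeal K Q) r := by
  have htop : squarefreeIdeal K Q = ⊤ :=
    (Ideal.eq_top_iff_one _).2 (by simpa using prod_X_mem_squarefreeIdeal (K := K) hQ)
  exact htop ▸ regLE_top r

end SquarefreeIdeal

section Matching

variable {V : Type*} {G : SimpleGraph V} {M N : Finset (Sym2 V)} {A B : Finset V} {u v w : V}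
  {k : ℕ}

/-- The vertex set `V(M)` of a finite set of edges; the `Finset` version of `matchVerts`. -/
def edgeVerts (M : Finset (Sym2 V)) : Finset V :=
  M.biUnion Sym2.toFinset

theorem mem_edgeVerts : v ∈ edgeVerts M ↔ ∃ e ∈ M, v ∈ e := by
  simp [edgeVerts]

theorem edgeVerts_mono (h : N ⊆ M) : edgeVerts N ⊆ edgeVerts M :=
  Finset.biUnion_subset_biUnion_of_subset_left _ h

theorem edgeVerts_insert : edgeVerts (insert s(u, v) M) = insert u (insert v (edgeVerts M)) := by
  ext; simp [edgeVerts, or_assoc]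

theorem _root_.IsMatchingSet.anti (hM : IsMatchingSet G M) (h : N ⊆ M) : IsMatchingSet G N :=
  ⟨fun e he => hM.1 e (h he), fun e he f hf => hM.2 e (h he) f (h hf)⟩

theorem _root_.IsMatchingSet.exists_adj (hM : IsMatchingSet G M) (hv : v ∈ edgeVerts M) :
    ∃ w ∈ edgeVerts M, G.Adj v w := by
  obtain ⟨e, he, hve⟩ := mem_edgeVerts.1 hv
  obtain ⟨w, rfl⟩ := Sym2.mem_iff_exists.1 hve
  exact ⟨w, mem_edgeVerts.2 ⟨_, he, Sym2.mem_mk_right v w⟩, hM.1 _ he⟩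

theorem _root_.IsMatchingSet.pairwiseDisjoint (hM : IsMatchingSet G M) :
    (M : Set (Sym2 V)).PairwiseDisjoint Sym2.toFinset :=
  fun e he f hf hef => Finset.disjoint_left.2 fun v hve hvf =>
    hM.2 e he f hf hef v (Sym2.mem_toFinset.1 hve) (Sym2.mem_toFinset.1 hvf)

theorem _root_.IsMatchingSet.card_filter_mem_le_one (hM : IsMatchingSet G M) (v : V) :
    (M.filter (v ∈ ·)).card ≤ 1 := by
  refine Finset.card_le_one.2 fun e he f hf => by_contra fun hef => ?_
  rw [Finset.mem_filter] at he hf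
  exact hM.2 e he.1 f hf.1 hef v he.2 hf.2

theorem _root_.IsMatchingSet.insert (hM : IsMatchingSet G M) (huv : G.Adj u v)
    (hu : u ∉ edgeVerts M) (hv : v ∉ edgeVerts M) : IsMatchingSet G (insert s(u, v) M) := by
  have hnew : ∀ f ∈ M, ∀ x ∈ s(u, v), x ∉ f := by
    simp only [Sym2.mem_iff]
    rintro f hf x (rfl | rfl) hx
    exacts [hu (mem_edgeVerts.2 ⟨f, hf, hx⟩), hv (mem_edgeVerts.2 ⟨f, hf, hx⟩)]
  refine ⟨Finset.forall_mem_insert _ _ _ |>.2 ⟨huv, hM.1⟩, fun e he f hf hef x hxe hxf => ?_⟩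
  rcases Finset.mem_insert.1 he with rfl | he <;> rcases Finset.mem_insert.1 hf with rfl | hf
  · exact hef rfl
  · exact hnew f hf x hxe hxf
  · exact hnew e he x hxf hxe
  · exact hM.2 e he f hf hef x hxe hxf

theorem card_insert_of_notMem_edgeVerts (hu : u ∉ edgeVerts M) :
    (insert s(u, v) M).card = M.card + 1 :=
  Finset.card_insert_of_notMem fun h => hu (mem_edgeVerts.2 ⟨_, h, Sym2.mem_mk_left u v⟩)

variable (G) in
/-- The subgraph of `G` induced on `B` has a matching with `k` edges. -/
def HasMatching (B : Finset V) (k : ℕ) : Prop :=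
  ∃ M, IsMatchingSet G M ∧ edgeVerts M ⊆ B ∧ M.card = k

theorem _root_.IsMatchingSet.hasMatching (hM : IsMatchingSet G M) (hB : edgeVerts M ⊆ B)
    (hk : k ≤ M.card) : HasMatching G B k := by
  obtain ⟨N, hNM, hN⟩ := Finset.exists_subset_card_eq hk
  exact ⟨N, hM.anti hNM, (edgeVerts_mono hNM).trans hB, hN⟩

theorem HasMatching.mono (h : HasMatching G A k) (hAB : A ⊆ B) : HasMatching G B k :=
  let ⟨M, hM, hMA, hk⟩ := h
  ⟨M, hM, hMA.trans hAB, hk⟩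

theorem hasMatching_zero : HasMatching G B 0 :=
  ⟨∅, by simp [IsMatchingSet], by simp [edgeVerts], rfl⟩

theorem HasMatching.exists_adj (h : HasMatching G B (k + 1)) : ∃ x ∈ B, ∃ y ∈ B, G.Adj x y := by
  obtain ⟨M, hM, hMB, hk⟩ := h
  obtain ⟨⟨x, y⟩, he⟩ := Finset.card_pos.1 (k.succ_pos.trans_eq hk.symm)
  exact ⟨x, hMB (mem_edgeVerts.2 ⟨_, he, Sym2.mem_mk_left x y⟩),
    y, hMB (mem_edgeVerts.2 ⟨_, he, Sym2.mem_mk_right x y⟩), hM.1 _ he⟩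

theorem HasMatching.sdiff {D : Finset V} (h : HasMatching G B (k + D.card)) :
    HasMatching G (B \ D) k := by
  obtain ⟨M, hM, hMB, hk⟩ := h
  let bad := D.biUnion fun v => M.filter (v ∈ ·)
  have hbad : bad.card ≤ D.card := by
    simpa using Finset.card_biUnion_le_card_mul D _ 1 fun v _ => hM.card_filter_mem_le_one v
  refine (hM.anti Finset.sdiff_subset).hasMatching (M := M \ bad) (fun v hv => ?_) ?_
  · obtain ⟨e, he, hve⟩ := mem_edgeVerts.1 hv
    obtain ⟨heM, hebad⟩ := Finset.mem_sdiff.1 he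
    refine Finset.mem_sdiff.2 ⟨hMB (mem_edgeVerts.2 ⟨e, heM, hve⟩), fun hvD => hebad ?_⟩
    exact Finset.mem_biUnion.2 ⟨v, hvD, Finset.mem_filter.2 ⟨heM, hve⟩⟩
  · have := Finset.le_card_sdiff bad M
    omega

theorem hasMatching_insert_iff_of_forall_not_adj (hu : ∀ w ∈ B, ¬ G.Adj u w) :
    HasMatching G (insert u B) k ↔ HasMatching G B k := by
  refine ⟨fun ⟨M, hM, hMB, hk⟩ => ⟨M, hM, fun v hv => ?_, hk⟩,
    fun h => h.mono (Finset.subset_insert u B)⟩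
  refine Finset.mem_of_mem_insert_of_ne (hMB hv) ?_
  rintro rfl
  obtain ⟨w, hw, hvw⟩ := hM.exists_adj hv
  exact hu w (Finset.mem_of_mem_insert_of_ne (hMB hw) hvw.ne') hvw

theorem hasMatching_insert_leaf_iff (huv : G.Adj u v) (hu : u ∉ B) (hv : v ∉ B)
    (hleaf : ∀ w ∈ B, ¬ G.Adj v w) :
    HasMatching G (insert u (insert v B)) (k + 1) ↔ HasMatching G B k := by
  refine ⟨fun h => ?_, fun ⟨M, hM, hMB, hk⟩ => ?_⟩
  · rw [← hasMatching_insert_iff_of_forall_not_adj hleaf]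
    refine (HasMatching.sdiff (D := {u}) h).mono ?_
    rw [Finset.insert_sdiff_of_mem _ (Finset.mem_singleton_self u)]
    exact Finset.sdiff_subset
  · have huM : u ∉ edgeVerts M := fun h => hu (hMB h)
    refine ⟨insert s(u, v) M, hM.insert huv huM fun h => hv (hMB h), ?_, ?_⟩
    · rw [edgeVerts_insert]
      gcongr
    · rw [card_insert_of_notMem_edgeVerts huM, hk]

end Matching

section Forest

variable {V : Type*} {G : SimpleGraph V} {W : Finset V} {u v x y : V}

theorem exists_forall_adj_eq_of_adj [Finite V] (hG : G.IsAcyclic) (hxy : G.Adj x y) :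
    ∃ u v, G.Adj u v ∧ ∀ w, G.Adj v w → w = u := by
  have : Nonempty V := ⟨x⟩
  obtain ⟨a, b, p, hp, hmax⟩ := SimpleGraph.Walk.exists_isPath_forall_isPath_length_le_length G
  cases p with
  | nil => simpa using hmax x y (.cons hxy .nil) (by simp [hxy.ne])
  | cons hac q =>
    refine ⟨_, a, hac.symm, fun w haw => ?_⟩
    by_cases hw : w ∈ (SimpleGraph.Walk.cons hac q).support
    · simpa using hG.eq_snd_of_adj_start hp haw hw
    · simpa using hmax w b _ (hp.cons hw (h := haw.symm))

/-- The vertex `v` is a leaf of the induced subgraph `G[W]`, and `u` is its only neighbour. -/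
structure IsLeafAt (G : SimpleGraph V) (W : Finset V) (u v : V) : Prop where
  mem_left : u ∈ W
  mem_right : v ∈ W
  adj : G.Adj u v
  eq_of_adj : ∀ w ∈ W, G.Adj v w → w = u

theorem IsLeafAt.of_adj (hv : ∃ w, IsLeafAt G W w v) (hu : u ∈ W) (huv : G.Adj u v) :
    IsLeafAt G W u v := by
  obtain ⟨w, hwv⟩ := hv
  obtain rfl := hwv.eq_of_adj u hu huv.symm
  exact hwv

theorem IsLeafAt.not_adj (hv : IsLeafAt G W u v) {T : Finset V} (hT : T ⊆ W) (hu : u ∉ T) :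
    ∀ z ∈ T, ¬ G.Adj v z :=
  fun z hz hvz => hu (hv.eq_of_adj z (hT hz) hvz ▸ hz)

theorem exists_isLeafAt (hG : G.IsAcyclic) (hx : x ∈ W) (hy : y ∈ W) (hxy : G.Adj x y) :
    ∃ u v, IsLeafAt G W u v := by
  obtain ⟨u, v, huv, huniq⟩ := exists_forall_adj_eq_of_adj (G := G.induce (W : Set V))
    (hG.induce _) (x := ⟨x, hx⟩) (y := ⟨y, hy⟩) hxy
  exact ⟨u, v, u.2, v.2, huv, fun w hw hvw => congrArg Subtype.val (huniq ⟨w, hw⟩ hvw)⟩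

-- Unless each edge of `G[W]` has a leaf as an endpoint, take for `u` a leaf of the forest that
-- is left when all leaves of `G[W]` are removed.
theorem exists_isLeafAt_forall_adj (hG : G.IsAcyclic) (hx : x ∈ W) (hy : y ∈ W)
    (hxy : G.Adj x y) :
    ∃ u v w, IsLeafAt G W u v ∧ ∀ z ∈ W, G.Adj u z → z = w ∨ IsLeafAt G W u z := by
  let L := W.filter fun v => ∃ u, IsLeafAt G W u v
  have isLeafAt_of_mem {u z : V} (hz : z ∈ L) (hu : u ∈ W) (huz : G.Adj u z) :
      IsLeafAt G W u z := .of_adj (Finset.mem_filter.1 hz).2 hu huz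
  by_cases hedge : ∃ x ∈ W \ L, ∃ y ∈ W \ L, G.Adj x y
  · obtain ⟨x, hx, y, hy, hxy⟩ := hedge
    obtain ⟨w, u, hw, hu, hwu, huniq⟩ := exists_isLeafAt hG hx hy hxy
    obtain ⟨huW, huL⟩ := Finset.mem_sdiff.1 hu
    have hnbr : ∀ z ∈ W, G.Adj u z → z = w ∨ IsLeafAt G W u z := fun z hz huz =>
      (em (z ∈ L)).symm.imp (fun hzL => huniq z (Finset.mem_sdiff.2 ⟨hz, hzL⟩) huz)
        fun hzL => isLeafAt_of_mem hzL huW huz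
    obtain ⟨v, hv, huv, hvw⟩ : ∃ v ∈ W, G.Adj u v ∧ v ≠ w := by
      by_contra! hcon
      exact huL (Finset.mem_filter.2 ⟨huW, w, (Finset.mem_sdiff.1 hw).1, huW, hwu, hcon⟩)
    exact ⟨u, v, w, (hnbr v hv huv).resolve_left hvw, hnbr⟩
  · push Not at hedge
    obtain ⟨u, v, hv⟩ := exists_isLeafAt hG hx hy hxy
    refine ⟨u, v, v, hv, fun z hz huz => ?_⟩
    by_cases hzL : z ∈ L
    · exact .inr (isLeafAt_of_mem hzL hv.mem_left huz)
    by_cases huL : u ∈ L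
    · have huv := isLeafAt_of_mem huL hv.mem_right hv.adj.symm
      exact .inl (huv.eq_of_adj z hz huz)
    · exact absurd huz (hedge u (Finset.mem_sdiff.2 ⟨hv.mem_left, huL⟩) z
        (Finset.mem_sdiff.2 ⟨hz, hzL⟩))

end Forest

section Admissible

variable {V α : Type*} {G : SimpleGraph V} {M : Finset (Sym2 V)} {B W T : Finset V} {c : V → α}
  {u v w : V} {k a : ℕ}

variable (G) in
/-- The colouring `c` is constant on every connected component of the induced subgraph `G[B]`. -/
def IsComponentColouring (B : Finset V) (c : V → α) : Prop :=
  ∀ x ∈ B, ∀ y ∈ B, G.Adj x y → c x = c y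

theorem IsComponentColouring.insert_insert (hc : IsComponentColouring G B c) {γ : α} (hu : u ∉ B)
    (hv : v ∉ B) (hγu : ∀ z ∈ B, G.Adj u z → c z = γ) (hγv : ∀ z ∈ B, G.Adj v z → c z = γ) :
    IsComponentColouring G (insert u (insert v B)) (B.piecewise c fun _ => γ) := by
  have hnew {x y : V} (hx : x = u ∨ x = v) (hy : y ∈ B) (hxy : G.Adj x y) : c y = γ := by
    rcases hx with rfl | rfl
    exacts [hγu y hy hxy, hγv y hy hxy]
  intro x hx y hy hxy
  simp only [Finset.mem_insert, ← or_assoc] at hx hy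
  by_cases hxB : x ∈ B <;> by_cases hyB : y ∈ B <;> simp only [Finset.piecewise, hxB, hyB, if_true,
    if_false]
  · exact hc x hxB y hyB hxy
  · exact hnew (hy.resolve_right hyB) hxB hxy.symm
  · exact (hnew (hx.resolve_right hxB) hyB hxy).symm

theorem image_insert_insert_piecewise [DecidableEq α] {γ : α} (hu : u ∉ B) (hv : v ∉ B) :
    (insert u (insert v B)).image (B.piecewise c fun _ => γ) = insert γ (B.image c) := by
  rw [Finset.image_insert, Finset.image_insert, Finset.piecewise_eq_of_notMem _ _ _ hu,
    Finset.piecewise_eq_of_notMem _ _ _ hv, Finset.insert_idem]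
  exact congrArg _ (Finset.image_congr fun x hx => Finset.piecewise_eq_of_mem _ _ _ hx)

theorem _root_.IsAdmissibleMatching.exists_isComponentColouring
    (hM : IsAdmissibleMatching G k M) :
    ∃ c : V → ℕ, IsComponentColouring G (edgeVerts M) c ∧
      M.card + 1 ≤ ((edgeVerts M).image c).card + k := by
  obtain ⟨-, P, hne, -, rfl, hgap, hcard, -⟩ := hM
  have exists_part {v : V} (hv : v ∈ edgeVerts (P.biUnion id)) : ∃ p ∈ P, v ∈ edgeVerts p := by
    obtain ⟨e, he, hve⟩ := mem_edgeVerts.1 hv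
    obtain ⟨p, hp, hep⟩ := Finset.mem_biUnion.1 he
    exact ⟨p, hp, mem_edgeVerts.2 ⟨e, hep, hve⟩⟩
  have part_eq {p q : Finset (Sym2 V)} {x y : V} (hp : p ∈ P) (hq : q ∈ P) (hx : x ∈ edgeVerts p)
      (hy : y ∈ edgeVerts q) (hxy : x = y ∨ G.Adj x y) : p = q := by
    obtain ⟨e, he, hxe⟩ := mem_edgeVerts.1 hx
    obtain ⟨f, hf, hyf⟩ := mem_edgeVerts.1 hy
    by_contra hpq
    have hef := hgap p hp q hq hpq e he f hf
    rcases hxy with rfl | hxy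
    exacts [hef.1 x hxe hyf, hef.2 x y hxe hyf hxy]
  obtain ⟨num, hnum⟩ := Set.countable_iff_exists_injOn.1 P.countable_toSet
  let c (v : V) : ℕ := if h : ∃ p ∈ P, v ∈ edgeVerts p then num h.choose else 0
  have c_eq {v : V} {p : Finset (Sym2 V)} (hp : p ∈ P) (hv : v ∈ edgeVerts p) : c v = num p := by
    have h : ∃ p ∈ P, v ∈ edgeVerts p := ⟨p, hp, hv⟩
    simp only [c, dif_pos h, part_eq h.choose_spec.1 hp h.choose_spec.2 hv (.inl rfl)]
  refine ⟨c, fun x hx y hy hxy => ?_, hcard.trans (Nat.add_le_add_right ?_ k)⟩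
  · obtain ⟨p, hp, hxp⟩ := exists_part hx
    obtain ⟨q, hq, hyq⟩ := exists_part hy
    rw [c_eq hp hxp, c_eq hq hyq, part_eq hp hq hxp hyq (.inr hxy)]
  · rw [← Finset.card_image_of_injOn hnum]
    refine Finset.card_le_card (Finset.image_subset_iff.2 fun p hp => ?_)
    obtain ⟨e, he⟩ := hne p hp
    have hv : e.out.1 ∈ edgeVerts p := mem_edgeVerts.2 ⟨e, he, e.out_fst_mem⟩
    exact Finset.mem_image.2
      ⟨_, edgeVerts_mono (Finset.subset_biUnion_of_mem id hp) hv, c_eq hp hv⟩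

/-- The edges of `M` both of whose endpoints have colour `i`. -/
def colourClass (M : Finset (Sym2 V)) (c : V → α) (i : α) : Finset (Sym2 V) :=
  M.filter fun e => ∀ v ∈ e, c v = i

theorem mem_colourClass {e : Sym2 V} {i : α} :
    e ∈ colourClass M c i ↔ e ∈ M ∧ ∀ v ∈ e, c v = i :=
  Finset.mem_filter

theorem eq_of_mem_colourClass {e : Sym2 V} {i j : α} (hi : e ∈ colourClass M c i)
    (hj : e ∈ colourClass M c j) : i = j :=
  ((mem_colourClass.1 hi).2 _ e.out_fst_mem).symm.trans ((mem_colourClass.1 hj).2 _ e.out_fst_mem)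

theorem _root_.IsMatchingSet.mem_colourClass (hM : IsMatchingSet G M)
    (hc : IsComponentColouring G (edgeVerts M) c) {e : Sym2 V} (he : e ∈ M) (hv : v ∈ e) :
    e ∈ colourClass M c (c v) := by
  refine SquarefreePower.mem_colourClass.2 ⟨he, fun w hw => ?_⟩
  obtain ⟨x, rfl⟩ := Sym2.mem_iff_exists.1 hv
  rcases Sym2.mem_iff.1 hw with rfl | rfl
  · rfl
  · exact (hc v (mem_edgeVerts.2 ⟨_, he, hv⟩) w (mem_edgeVerts.2 ⟨_, he, hw⟩) (hM.1 _ he)).symm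

theorem IsComponentColouring.isGap (hc : IsComponentColouring G (edgeVerts M) c) {e f : Sym2 V}
    {i j : α} (hij : i ≠ j) (he : e ∈ colourClass M c i) (hf : f ∈ colourClass M c j) :
    IsGap G e f := by
  obtain ⟨heM, hei⟩ := mem_colourClass.1 he
  obtain ⟨hfM, hfj⟩ := mem_colourClass.1 hf
  refine ⟨fun v hve hvf => hij ((hei v hve).symm.trans (hfj v hvf)), fun x y hx hy hxy => hij ?_⟩
  rw [← hei x hx, ← hfj y hy,
    hc x (mem_edgeVerts.2 ⟨e, heM, hx⟩) y (mem_edgeVerts.2 ⟨f, hfM, hy⟩) hxy]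

theorem _root_.IsMatchingSet.isAdmissibleMatching [DecidableEq α] (hM : IsMatchingSet G M)
    (hG : G.IsAcyclic) (hc : IsComponentColouring G (edgeVerts M) c)
    (hcard : M.card + 1 ≤ ((edgeVerts M).image c).card + k) : IsAdmissibleMatching G k M := by
  have colourClass_nonempty : ∀ i ∈ (edgeVerts M).image c, (colourClass M c i).Nonempty := by
    simp only [Finset.forall_mem_image, mem_edgeVerts]
    exact fun v ⟨e, he, hve⟩ => ⟨e, hM.mem_colourClass hc he hve⟩
  have colourClass_injOn : Set.InjOn (colourClass M c) ((edgeVerts M).image c) :=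
    fun i hi j _ hij => by
      obtain ⟨e, he⟩ := colourClass_nonempty i hi
      exact eq_of_mem_colourClass he (hij ▸ he)
  refine ⟨hM, ((edgeVerts M).image c).image (colourClass M c),
    Finset.forall_mem_image.2 colourClass_nonempty, ?_, ?_, ?_, ?_, fun p _ => hG.induce _⟩
  · simp only [Finset.mem_image (f := colourClass M c)]
    rintro _ ⟨i, -, rfl⟩ _ ⟨j, -, rfl⟩ hij
    exact Finset.disjoint_left.2 fun e hei hej => hij (congrArg _ (eq_of_mem_colourClass hei hej))
  · refine subset_antisymm (Finset.biUnion_subset.2 ?_) fun e he => ?_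
    · exact Finset.forall_mem_image.2 fun i _ => Finset.filter_subset _ _
    · have hv : e.out.1 ∈ edgeVerts M := mem_edgeVerts.2 ⟨e, he, e.out_fst_mem⟩
      exact Finset.mem_biUnion.2 ⟨_, Finset.mem_image_of_mem _ (Finset.mem_image_of_mem c hv),
        hM.mem_colourClass hc he e.out_fst_mem⟩
  · simp only [Finset.mem_image (f := colourClass M c)]
    rintro _ ⟨i, -, rfl⟩ _ ⟨j, -, rfl⟩ hij e he f hf
    exact hc.isGap (fun h => hij (congrArg _ h)) he hf
  · rwa [Finset.card_image_of_injOn colourClass_injOn]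

/-- Every `k`-admissible matching of `G[W]` has at most `a` edges. -/
def AdmissibleBound (G : SimpleGraph V) (W : Finset V) (k a : ℕ) : Prop :=
  ∀ M, IsAdmissibleMatching G k M → edgeVerts M ⊆ W → M.card ≤ a

theorem AdmissibleBound.anti (h : AdmissibleBound G W k a) (hT : T ⊆ W) :
    AdmissibleBound G T k a :=
  fun M hM hMT => h M hM (hMT.trans hT)

theorem AdmissibleBound.of_succ (h : AdmissibleBound G W (k + 1) a) : AdmissibleBound G W k a :=
  fun M ⟨hM, P, hne, hdisj, hunion, hgap, hcard, hforest⟩ hMW =>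
    h M ⟨hM, P, hne, hdisj, hunion, hgap, hcard.trans (by omega), hforest⟩ hMW

theorem card_succ_le_of_admissibleBound [DecidableEq α] (hG : G.IsAcyclic)
    (h : AdmissibleBound G W k a) {γ : α} (hM : IsMatchingSet G M) (hMW : edgeVerts M ⊆ W)
    (hc : IsComponentColouring G (edgeVerts M) c) (huW : u ∈ W) (hvW : v ∈ W)
    (huM : u ∉ edgeVerts M) (hvM : v ∉ edgeVerts M) (huv : G.Adj u v)
    (hγu : ∀ z ∈ edgeVerts M, G.Adj u z → c z = γ) (hγv : ∀ z ∈ edgeVerts M, G.Adj v z → c z = γ)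
    (hcard : M.card + 2 ≤ (insert γ ((edgeVerts M).image c)).card + k) : M.card + 1 ≤ a := by
  have hverts := edgeVerts_insert (M := M) (u := u) (v := v)
  have hins := card_insert_of_notMem_edgeVerts (v := v) huM
  rw [← hins]
  refine h _ ((hM.insert huv huM hvM).isAdmissibleMatching hG (c := (edgeVerts M).piecewise c
    fun _ => γ) ?_ ?_) ?_
  · exact hverts ▸ hc.insert_insert huM hvM hγu hγv
  · rwa [hverts, image_insert_insert_piecewise huM hvM, hins]
  · rw [hverts]
    exact Finset.insert_subset huW (Finset.insert_subset hvW hMW)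

-- The edge `uv` can be added to a matching of `G[T]` as a new part.
theorem AdmissibleBound.of_isLeafAt_of_not_adj (hG : G.IsAcyclic)
    (h : AdmissibleBound G W k (a + 1)) (hv : IsLeafAt G W u v) (hT : T ⊆ W) (huT : u ∉ T)
    (hvT : v ∉ T) (hu : ∀ z ∈ T, ¬ G.Adj u z) : AdmissibleBound G T k a := by
  intro M hM hMT
  obtain ⟨c, hc, hcard⟩ := hM.exists_isComponentColouring
  obtain ⟨γ, hγ⟩ := Infinite.exists_notMem_finset ((edgeVerts M).image c)
  refine Nat.le_of_succ_le_succ (card_succ_le_of_admissibleBound hG h (γ := γ) hM.1 (hMT.trans hT)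
    hc hv.mem_left hv.mem_right (fun h => huT (hMT h)) (fun h => hvT (hMT h)) hv.adj
    (fun z hz huz => absurd huz (hu z (hMT hz)))
    (fun z hz hvz => absurd hvz (hv.not_adj hT huT z (hMT hz))) ?_)
  rw [Finset.card_insert_of_notMem hγ]
  omega

-- The edge `uv` can be added to a matching of `G[T]`, within the part of an edge through `w`.
theorem AdmissibleBound.of_isLeafAt (hG : G.IsAcyclic) (h : AdmissibleBound G W (k + 1) (a + 1))
    (hv : IsLeafAt G W u v) (hT : T ⊆ W) (huT : u ∉ T) (hvT : v ∉ T)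
    (hu : ∀ z ∈ T, G.Adj u z → z = w ∨ IsLeafAt G W u z) : AdmissibleBound G T k a := by
  intro M hM hMT
  obtain ⟨c, hc, hcard⟩ := hM.exists_isComponentColouring
  have hγu : ∀ z ∈ edgeVerts M, G.Adj u z → c z = c w := fun z hz huz => by
    obtain ⟨t, ht, hzt⟩ := hM.1.exists_adj hz
    rw [(hu z (hMT hz) huz).resolve_right fun hz => hz.not_adj hT huT t (hMT ht) hzt]
  refine Nat.le_of_succ_le_succ (card_succ_le_of_admissibleBound hG h (γ := c w) hM.1
    (hMT.trans hT) hc hv.mem_left hv.mem_right (fun h => huT (hMT h)) (fun h => hvT (hMT h)) hv.adj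
    hγu (fun z hz hvz => absurd hvz (hv.not_adj hT huT z (hMT hz))) ?_)
  have := Finset.card_le_card (Finset.subset_insert (c w) ((edgeVerts M).image c))
  omega

end Admissible

section UpperBound

variable {V : Type*} {K : Type*} [CommRing K] {G : SimpleGraph V} {W T : Finset V} {u v w l : V}
  {k a r : ℕ}

theorem isUpperSet_hasMatching (W : Finset V) (k : ℕ) :
    IsUpperSet {A | HasMatching G (A ∩ W) k} :=
  fun _ _ hAB h => h.mono (Finset.inter_subset_inter_right hAB)

theorem isUpperSet_hasMatching_insert (u : V) (T : Finset V) (k : ℕ) :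
    IsUpperSet {A | HasMatching G (insert u (A ∩ T)) k} :=
  fun _ _ hAB h => h.mono (Finset.insert_subset_insert _ (Finset.inter_subset_inter_right hAB))

theorem insert_inter_eq_insert_inter_erase {A : Finset V} (hl : l ∈ T) :
    insert l A ∩ T = insert l (A ∩ T.erase l) := by
  ext x
  by_cases hx : x = l <;> simp [hx, hl]

theorem hasMatching_insert_insert_inter_iff (hl : l ∈ T) (hu : u ∉ T) (hul : G.Adj u l)
    (hleaf : (∀ z ∈ T, ¬ G.Adj l z) ∨ ∀ z ∈ T.erase l, ¬ G.Adj u z) (A : Finset V) :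
    HasMatching G (insert u (insert l A ∩ T)) (k + 1) ↔ HasMatching G (A ∩ T.erase l) k := by
  have huA : u ∉ A ∩ T.erase l := by simp [hu]
  have hlA : l ∉ A ∩ T.erase l := by simp
  rw [insert_inter_eq_insert_inter_erase hl]
  rcases hleaf with hleaf | hleaf
  · exact hasMatching_insert_leaf_iff hul huA hlA fun z hz =>
      hleaf z (Finset.mem_of_mem_erase (Finset.mem_inter.1 hz).2)
  · rw [Finset.insert_comm]
    exact hasMatching_insert_leaf_iff hul.symm hlA huA fun z hz =>
      hleaf z (Finset.mem_inter.1 hz).2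

theorem regLE_hasMatching_insert_of_adj (hl : l ∈ T) (hu : u ∉ T) (hul : G.Adj u l)
    (hleaf : (∀ z ∈ T, ¬ G.Adj l z) ∨ ∀ z ∈ T.erase l, ¬ G.Adj u z)
    (hdel : RegLE (squarefreeIdeal K {A | HasMatching G (insert u (A ∩ T.erase l)) (k + 1)})
      (r + 1))
    (hlink : RegLE (squarefreeIdeal K {A | HasMatching G (A ∩ T.erase l) k}) r) :
    RegLE (squarefreeIdeal K {A | HasMatching G (insert u (A ∩ T)) (k + 1)}) (r + 1) := by
  refine regLE_squarefreeIdeal_of_deletion_of_link (isUpperSet_hasMatching_insert u T _) l ?_ ?_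
  · simpa only [Set.mem_ofPred_eq, Finset.erase_inter, ← Finset.inter_erase] using hdel
  · simpa only [Set.mem_ofPred_eq, hasMatching_insert_insert_inter_iff hl hu hul hleaf] using hlink

theorem regLE_hasMatching_insert (hG : G.IsAcyclic)
    (ih : ∀ T ⊂ W, ∀ k a, AdmissibleBound G T k a →
      RegLE (squarefreeIdeal K {A | HasMatching G (A ∩ T) k}) (a + k))
    (hbound : AdmissibleBound G W (k + 1) (a + 1)) (hv : IsLeafAt G W u v)
    (hu : ∀ z ∈ W, G.Adj u z → z = w ∨ IsLeafAt G W u z) (hTu : T ⊆ W.erase u) :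
    RegLE (squarefreeIdeal K {A | HasMatching G (insert u (A ∩ T)) (k + 1)}) (a + k + 1) := by
  induction T using Finset.strongInduction with
  | H T ihT =>
  have hTW : T ⊆ W := hTu.trans (Finset.erase_subset u W)
  have huT : u ∉ T := fun h => Finset.notMem_erase u W (hTu h)
  have hTW' : T ⊂ W := Finset.ssubset_of_subset_of_ssubset hTu (Finset.erase_ssubset hv.mem_left)
  have herase (l : V) : T.erase l ⊆ W ∧ u ∉ T.erase l ∧ l ∉ T.erase l :=
    ⟨(T.erase_subset l).trans hTW, fun h => huT (Finset.mem_of_mem_erase h), T.notMem_erase l⟩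
  have hdel {l : V} (hl : l ∈ T) := ihT _ (Finset.erase_ssubset hl) ((T.erase_subset l).trans hTu)
  have ih_erase (l : V) := ih (T.erase l) (Finset.ssubset_of_subset_of_ssubset
    (T.erase_subset l) hTW')
  by_cases hleaf : ∃ l ∈ T, IsLeafAt G W u l
  · obtain ⟨l, hlT, hl⟩ := hleaf
    obtain ⟨hTl, hul, hll⟩ := herase l
    exact regLE_hasMatching_insert_of_adj hlT huT hl.adj (.inl (hl.not_adj hTW huT)) (hdel hlT)
      (ih_erase l _ _ (hbound.of_isLeafAt hG hl hTl hul hll fun z hz => hu z (hTl hz)))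
  push Not at hleaf
  have hvT : v ∉ T := fun h => hleaf v h hv
  have hu_nbr : ∀ z ∈ T, G.Adj u z → z = w := fun z hz huz =>
    (hu z (hTW hz) huz).resolve_right (hleaf z hz)
  by_cases hw : w ∈ T ∧ G.Adj u w
  · obtain ⟨hwT, huw⟩ := hw
    obtain ⟨hTw, huTw, -⟩ := herase w
    have hu_not_adj : ∀ z ∈ T.erase w, ¬ G.Adj u z := fun z hz huz =>
      Finset.ne_of_mem_erase hz (hu_nbr z (Finset.mem_of_mem_erase hz) huz)
    exact regLE_hasMatching_insert_of_adj hwT huT huw (.inr hu_not_adj) (hdel hwT)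
      (ih_erase w _ _ (AdmissibleBound.of_succ (hbound.of_isLeafAt_of_not_adj hG hv hTw huTw
        (fun h => hvT (Finset.mem_of_mem_erase h)) hu_not_adj)))
  · have hu_not_adj : ∀ z ∈ T, ¬ G.Adj u z := fun z hz huz => hw (hu_nbr z hz huz ▸ ⟨hz, huz⟩)
    have hiso (A : Finset V) :
        HasMatching G (insert u (A ∩ T)) (k + 1) ↔ HasMatching G (A ∩ T) (k + 1) :=
      hasMatching_insert_iff_of_forall_not_adj fun z hz => hu_not_adj z (Finset.mem_inter.1 hz).2
    simp only [hiso]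
    exact ih T hTW' _ _ (hbound.of_isLeafAt_of_not_adj hG hv hTW huT hvT hu_not_adj)

theorem AdmissibleBound.one_le (hG : G.IsAcyclic) (hbound : AdmissibleBound G W (k + 1) a)
    (hu : u ∈ W) (hv : v ∈ W) (huv : G.Adj u v) : 1 ≤ a := by
  have hempty : edgeVerts (∅ : Finset (Sym2 V)) = ∅ := by simp [edgeVerts]
  have := card_succ_le_of_admissibleBound hG hbound (M := ∅) (c := fun _ => 0) (γ := 0)
    (by simp [IsMatchingSet]) (by simp [hempty]) (by simp [IsComponentColouring, hempty]) hu hv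
    (by simp [hempty]) (by simp [hempty]) huv (by simp) (by simp) (by simp [hempty]; omega)
  simpa using this

theorem regLE_hasMatching_of_admissibleBound (hG : G.IsAcyclic)
    (hbound : AdmissibleBound G W k a) :
    RegLE (squarefreeIdeal K {A | HasMatching G (A ∩ W) k}) (a + k) := by
  induction W using Finset.strongInduction generalizing k a with
  | H W ih =>
  rcases k with - | k
  · exact regLE_squarefreeIdeal_of_empty_mem hasMatching_zero _
  by_cases hedge : ∃ x ∈ W, ∃ y ∈ W, G.Adj x y
  · obtain ⟨x, hx, y, hy, hxy⟩ := hedge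
    obtain ⟨u, v, w, hv, hu⟩ := exists_isLeafAt_forall_adj hG hx hy hxy
    obtain ⟨a, rfl⟩ := Nat.exists_eq_add_of_le' (hbound.one_le hG hx hy hxy)
    rw [show a + 1 + (k + 1) = a + k + 1 + 1 by ring]
    refine regLE_squarefreeIdeal_of_deletion_of_link (isUpperSet_hasMatching W _) u ?_ ?_
    · have hdel := ih _ (Finset.erase_ssubset hv.mem_left) (hbound.anti (W.erase_subset u))
      simpa only [Set.mem_ofPred_eq, Finset.erase_inter, ← Finset.inter_erase, add_assoc,
        add_comm, add_left_comm] using hdel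
    · simpa only [Set.mem_ofPred_eq, insert_inter_eq_insert_inter_erase hv.mem_left] using
        regLE_hasMatching_insert hG (fun T hT _ _ => ih T hT) hbound hv hu subset_rfl
  · push Not at hedge
    refine regLE_squarefreeIdeal_of_eq_empty (Set.eq_empty_of_forall_notMem fun A hA => ?_) _
    obtain ⟨x, hx, y, hy, hxy⟩ := HasMatching.exists_adj hA
    exact hedge x (Finset.mem_inter.1 hx).2 y (Finset.mem_inter.1 hy).2 hxy

end UpperBound

section EdgeIdeal

variable {K : Type*} [Field K] {n : ℕ} {G : SimpleGraph (Fin n)} {k : ℕ}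

theorem edgeIdealSqPow_eq_squarefreeIdeal :
    edgeIdealSqPow K G k = squarefreeIdeal K {A | HasMatching G A k} := by
  have hverts (M : Finset (Sym2 (Fin n))) :
      Finset.univ.filter (fun v => ∃ e ∈ M, v ∈ e) = edgeVerts M := by
    ext v
    simp [mem_edgeVerts]
  simp only [edgeIdealSqPow, hverts]
  refine le_antisymm (Ideal.span_le.2 ?_) (Ideal.span_le.2 ?_)
  · rintro _ ⟨M, hM, hk, rfl⟩
    exact prod_X_mem_squarefreeIdeal ⟨M, hM, subset_rfl, hk⟩
  · rintro _ ⟨A, ⟨M, hM, hMA, hk⟩, rfl⟩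
    simp only [SetLike.mem_coe, ← Finset.prod_sdiff hMA]
    exact Ideal.mul_mem_left _ _ (Ideal.subset_span ⟨M, hM, hk, rfl⟩)

theorem bddAbove_card {α : Type*} [Finite α] (P : Finset α → Prop) :
    BddAbove {m | ∃ s, P s ∧ s.card = m} :=
  have := Fintype.ofFinite α
  ⟨Fintype.card α, by rintro _ ⟨s, -, rfl⟩; exact s.card_le_univ⟩

theorem card_le_aim {V : Type*} [Fintype V] {G : SimpleGraph V} {M : Finset (Sym2 V)}
    (hM : IsAdmissibleMatching G k M) : M.card ≤ aim G k :=
  le_csSup (bddAbove_card _) ⟨M, hM, rfl⟩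

theorem regLE_edgeIdealSqPow (hG : G.IsAcyclic) : RegLE (edgeIdealSqPow K G k) (aim G k + k) := by
  have h := regLE_hasMatching_of_admissibleBound (K := K) (W := Finset.univ) (k := k) hG
    fun M hM _ => card_le_aim hM
  simpa only [Finset.inter_univ, ← edgeIdealSqPow_eq_squarefreeIdeal] using h

end EdgeIdeal

section RegularSequence

variable {R : Type*} [CommRing R] {y : ℕ → R} {m s : ℕ}

/-- The ideal generated by the first `s` terms of the sequence `y`. -/
def prefixIdeal (y : ℕ → R) (s : ℕ) : Ideal R :=
  Ideal.span (y '' Set.Iio s)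

theorem apply_mem_prefixIdeal (h : m < s) : y m ∈ prefixIdeal y s :=
  Ideal.subset_span ⟨m, h, rfl⟩

theorem prefixIdeal_zero : prefixIdeal y 0 = ⊥ := by
  simp [prefixIdeal]

theorem prefixIdeal_succ : prefixIdeal y (s + 1) = prefixIdeal y s ⊔ Ideal.span {y s} := by
  rw [prefixIdeal, prefixIdeal, ← Ideal.span_union, ← Set.image_singleton, ← Set.image_union,
    Set.Iio_union_right, ← Order.Iio_succ, Order.succ_eq_add_one]

section Module

variable {N : Type*} [AddCommGroup N] [Module R N]

/-- The first `m` terms of `y` form a weakly regular sequence on `N`. This is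
`RingTheory.Sequence.IsWeaklyRegular`, with the sequence indexed by `ℕ` instead of a list. -/
def IsWeaklyRegularOn (N : Type*) [AddCommGroup N] [Module R N] (y : ℕ → R) (m : ℕ) : Prop :=
  ∀ s < m, ∀ v : N, y s • v ∈ prefixIdeal y s • (⊤ : Submodule R N) →
    v ∈ prefixIdeal y s • (⊤ : Submodule R N)

theorem mem_prefixIdeal_succ_smul_top {v : N} :
    v ∈ prefixIdeal y (s + 1) • (⊤ : Submodule R N) ↔
      ∃ u, v - y s • u ∈ prefixIdeal y s • (⊤ : Submodule R N) := by
  rw [prefixIdeal_succ, Submodule.sup_smul, Submodule.ideal_span_singleton_smul,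
    Submodule.mem_sup]
  simp only [Submodule.mem_smul_pointwise_iff_exists, Submodule.mem_top, true_and]
  constructor
  · rintro ⟨w, hw, _, ⟨u, rfl⟩, rfl⟩
    exact ⟨u, by simpa using hw⟩
  · rintro ⟨u, hu⟩
    exact ⟨_, hu, _, ⟨u, rfl⟩, sub_add_cancel _ _⟩

theorem mem_sup_prefixIdeal_succ_smul_top {P : Submodule R N} {u v : N}
    (h : v - y s • u ∈ P ⊔ prefixIdeal y s • (⊤ : Submodule R N)) :
    v ∈ P ⊔ prefixIdeal y (s + 1) • (⊤ : Submodule R N) := by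
  obtain ⟨p, hp, z, hz, hpz⟩ := Submodule.mem_sup.1 h
  refine Submodule.mem_sup.2 ⟨p, hp, y s • u + z, ?_, by rw [add_left_comm, hpz, add_sub_cancel]⟩
  exact mem_prefixIdeal_succ_smul_top.2 ⟨u, by simpa using hz⟩

theorem map_mem_smul_top {N' : Type*} [AddCommGroup N'] [Module R N'] (f : N →ₗ[R] N')
    {I : Ideal R} {v : N} (hv : v ∈ I • (⊤ : Submodule R N)) :
    f v ∈ I • (⊤ : Submodule R N') :=
  Submodule.smul_top_le_comap_smul_top I f hv

end Module

section Pi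

variable {ι : Type*} [Finite ι]

theorem mem_smul_top_pi_iff {I : Ideal R} {v : ι → R} :
    v ∈ I • (⊤ : Submodule R (ι → R)) ↔ ∀ p, v p ∈ I := by
  have := Fintype.ofFinite ι
  constructor
  · intro hv p
    simpa using map_mem_smul_top (LinearMap.proj p : (ι → R) →ₗ[R] R) hv
  · intro hv
    rw [pi_eq_sum_univ v]
    exact Submodule.sum_mem _ fun p _ => Submodule.smul_mem_smul (hv p) trivial

theorem IsWeaklyRegularOn.pi (hy : IsWeaklyRegularOn R y m) : IsWeaklyRegularOn (ι → R) y m := by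
  intro s hs v hv
  rw [mem_smul_top_pi_iff] at hv ⊢
  simpa using fun p => hy s hs (v p) (by simpa using hv p)

end Pi

section Complex

variable {N : ℕ → Type*} [∀ i, AddCommGroup (N i)] [∀ i, Module R (N i)]
  {d : ∀ i, N (i + 1) →ₗ[R] N i}

theorem mem_range_sup_smul_top_of_apply_mem
    (hd : ∀ i, LinearMap.range (d (i + 1)) = LinearMap.ker (d i))
    (hy : ∀ i, IsWeaklyRegularOn (N i) y m) {s j : ℕ} (hsj : s ≤ j) (hsm : s ≤ m)
    {v : N (j + 1)} (hv : d j v ∈ prefixIdeal y s • (⊤ : Submodule R (N j))) :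
    v ∈ LinearMap.range (d (j + 1)) ⊔ prefixIdeal y s • (⊤ : Submodule R (N (j + 1))) := by
  induction s generalizing j with
  | zero =>
    rw [prefixIdeal_zero, Submodule.bot_smul, Submodule.mem_bot] at hv
    exact Submodule.mem_sup_left (hd j ▸ LinearMap.mem_ker.2 hv)
  | succ s ih =>
    obtain ⟨j, rfl⟩ := Nat.exists_eq_add_of_le' (Nat.one_le_of_lt hsj)
    obtain ⟨u, hu⟩ := mem_prefixIdeal_succ_smul_top.1 hv
    have ddv : d j (d (j + 1) v) = 0 := LinearMap.mem_ker.1 (hd j ▸ LinearMap.mem_range_self _ v)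
    have du : d j u ∈ prefixIdeal y s • (⊤ : Submodule R (N j)) := by
      refine hy j s hsm _ ?_
      simpa [ddv] using map_mem_smul_top (d j) hu
    obtain ⟨_, ⟨w, rfl⟩, z, hz, rfl⟩ := Submodule.mem_sup.1
      (ih (Nat.le_of_succ_le_succ hsj) (Nat.le_of_succ_le hsm) du)
    have hvw : d (j + 1) (v - y s • w) ∈ prefixIdeal y s • (⊤ : Submodule R (N (j + 1))) := by
      have := Submodule.add_mem _ hu (Submodule.smul_mem _ (y s) hz)
      simpa [smul_add, sub_add_eq_sub_sub] using this
    exact mem_sup_prefixIdeal_succ_smul_top (ih (Nat.le_of_succ_le hsj) (Nat.le_of_succ_le hsm) hvw)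

/-- Elements `a i` of `N i` with `d (a (s + 1)) ≡ y s • a s` modulo `(y 0, …, y (s - 1))` for
`s < m`: the steps of the diagram chase that lifts an element `a 0` annihilated by
`y 0, …, y (m - 1)` modulo the image of `d` to the `m`-th term of the complex. -/
def IsZigzag (d : ∀ i, N (i + 1) →ₗ[R] N i) (y : ℕ → R) (m : ℕ) (a : ∀ i, N i) : Prop :=
  ∀ s < m, d s (a (s + 1)) - y s • a s ∈ prefixIdeal y s • (⊤ : Submodule R (N s))

theorem exists_isZigzag (hd : ∀ i, LinearMap.range (d (i + 1)) = LinearMap.ker (d i))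
    (hy : ∀ i, IsWeaklyRegularOn (N i) y m) {g : N 0}
    (hg : ∀ i < m, y i • g ∈ LinearMap.range (d 0)) : ∃ a, IsZigzag d y m a ∧ a 0 = g := by
  let Continues (s : ℕ) (v : N s) : Prop := ∀ i, s ≤ i → i < m →
    y i • v ∈ LinearMap.range (d s) ⊔ prefixIdeal y s • (⊤ : Submodule R (N s))
  have continues_zero : Continues 0 g := fun i _ hi => Submodule.mem_sup_left (hg i hi)
  have step : ∀ s v, Continues s v → ∃ w, Continues (s + 1) w ∧
      (s < m → d s w - y s • v ∈ prefixIdeal y s • (⊤ : Submodule R (N s))) := by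
    intro s v hv
    by_cases hs : s < m
    swap
    · exact ⟨0, fun i hi him => absurd (hi.trans_lt him) (by omega), fun h => absurd h hs⟩
    obtain ⟨_, ⟨w, rfl⟩, z, hz, hwz⟩ := Submodule.mem_sup.1 (hv s le_rfl hs)
    refine ⟨w, fun i hi him => ?_, fun _ => ?_⟩
    · obtain ⟨_, ⟨u, rfl⟩, z', hz', huz⟩ := Submodule.mem_sup.1 (hv i (Nat.le_of_succ_le hi) him)
      have hd_sub : d s (y i • w - y s • u) = y s • z' - y i • z := by
        rw [map_sub, map_smul, map_smul, eq_sub_of_add_eq hwz, eq_sub_of_add_eq huz, smul_sub,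
          smul_sub, smul_comm, sub_sub_sub_cancel_left]
      exact mem_sup_prefixIdeal_succ_smul_top (mem_range_sup_smul_top_of_apply_mem hd hy le_rfl
        hs.le (hd_sub ▸ Submodule.sub_mem _ (Submodule.smul_mem _ _ hz')
          (Submodule.smul_mem _ _ hz)))
    · rw [← hwz, sub_add_cancel_left]
      exact Submodule.neg_mem _ hz
  choose! next continues_next next_sub using step
  let a (s : ℕ) : {v : N s // Continues s v} :=
    Nat.rec ⟨g, continues_zero⟩ (fun s v => ⟨next s v, continues_next s v v.2⟩) s
  exact ⟨fun s => (a s).1, fun s hs => next_sub s _ (a s).2 hs, rfl⟩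

theorem IsZigzag.mem_range (hdd : ∀ i v, d i (d (i + 1) v) = 0)
    (hy : ∀ i, IsWeaklyRegularOn (N i) y m) {a : ∀ i, N i} (ha : IsZigzag d y m a)
    (ham : a m ∈ prefixIdeal y m • (⊤ : Submodule R (N m))) : a 0 ∈ LinearMap.range (d 0) := by
  have descend : ∀ s ≤ m,
      a s ∈ LinearMap.range (d s) ⊔ prefixIdeal y s • (⊤ : Submodule R (N s)) := by
    intro s hs
    induction hs using Nat.decreasingInduction with
    | self => exact Submodule.mem_sup_right ham
    | of_succ s hs ih =>
      obtain ⟨_, ⟨w, rfl⟩, z, hz, hwz⟩ := Submodule.mem_sup.1 ih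
      obtain ⟨u, hu⟩ := mem_prefixIdeal_succ_smul_top.1 hz
      have hdz : d s (a (s + 1)) = d s z := by rw [← hwz, map_add, hdd, zero_add]
      have hsub : a s - d s u ∈ prefixIdeal y s • (⊤ : Submodule R (N s)) := by
        refine hy s s hs _ ?_
        have := Submodule.sub_mem _ (map_mem_smul_top (d s) hu) (ha s hs)
        rwa [hdz, map_sub, map_smul, sub_sub_sub_cancel_left, ← smul_sub] at this
      exact Submodule.mem_sup.2 ⟨_, ⟨u, rfl⟩, _, hsub, add_sub_cancel _ _⟩
  simpa [prefixIdeal_zero] using descend 0 m.zero_le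

end Complex

end RegularSequence

section BaseChange

variable {R R' ι κ μ : Type*} [CommRing R] [CommRing R'] [Fintype ι]

/-- The base change along `φ` of a map of finite free modules: `φ` applied to its matrix. -/
def baseChange (φ : R →+* R') (f : (ι → R) →ₗ[R] (κ → R)) : (ι → R') →ₗ[R'] (κ → R') :=
  (f.toMatrix'.map φ).mulVecLin

theorem baseChange_comp (φ : R →+* R') (f : (ι → R) →ₗ[R] (κ → R)) (v : ι → R) :
    baseChange φ f (φ ∘ v) = φ ∘ f v := by
  funext p
  rw [baseChange, Matrix.mulVecLin_apply, Function.comp_apply, ← LinearMap.toMatrix'_mulVec,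
    RingHom.map_mulVec]

theorem baseChange_baseChange {g : (κ → R) →ₗ[R] (μ → R)} {f : (ι → R) →ₗ[R] (κ → R)}
    [Fintype κ] (hgf : ∀ v, g (f v) = 0) (φ : R →+* R') (v : ι → R') :
    baseChange φ g (baseChange φ f v) = 0 := by
  have hmul : g.toMatrix' * f.toMatrix' = 0 := by
    rw [← LinearMap.toMatrix'_comp, LinearMap.ext hgf (f := g ∘ₗ f) (g := 0), map_zero]
  simp only [baseChange, Matrix.mulVecLin_apply, Matrix.mulVec_mulVec]
  rw [← Matrix.map_mul, hmul, Matrix.map_zero _ (map_zero φ), Matrix.zero_mulVec]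

theorem baseChange_apply_mem_map {f : (ι → R) →ₗ[R] (κ → R)} {I : Ideal R} {p : κ}
    (hf : ∀ v, f v p ∈ I) (φ : R →+* R') (v : ι → R') : baseChange φ f v p ∈ I.map φ := by
  rw [baseChange, Matrix.mulVecLin_apply]
  exact Ideal.sum_mem _ fun q _ => Ideal.mul_mem_right _ _ (Ideal.mem_map_of_mem φ (by
    simpa [LinearMap.toMatrix'_apply] using hf (Pi.single q 1)))

end BaseChange

section LowerBound

variable {σ K : Type*} [CommRing K]

theorem map_mem_of_isHomogeneous {R : Type*} [CommRing R] {φ : MvPolynomial σ K →+* R}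
    {I : Ideal R} (hφ : ∀ v, φ (X v) ∈ I) {a : MvPolynomial σ K} {e : ℕ} (ha : a.IsHomogeneous e)
    (he : e ≠ 0) : φ a ∈ I := by
  have mem_span : a ∈ Ideal.span ((X : σ → MvPolynomial σ K) '' Set.univ) := by
    refine mem_ideal_span_X_image.2 fun b hb => ?_
    have hb0 : b ≠ 0 := by
      rintro rfl
      exact he (by simpa using (ha (mem_support_iff.1 hb)).symm)
    simpa using Finsupp.ne_iff.1 hb0
  have le_comap : Ideal.span ((X : σ → MvPolynomial σ K) '' Set.univ) ≤ I.comap φ := by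
    rw [Ideal.span_le, Set.image_subset_iff]
    exact fun v _ => hφ v
  exact le_comap mem_span

theorem isWeaklyRegularOn_X {u : ℕ → σ} {m : ℕ} (hu : Set.InjOn u (Set.Iio m)) :
    IsWeaklyRegularOn (MvPolynomial σ K) (fun i => (X (u i) : MvPolynomial σ K)) m := by
  intro s hs a ha
  have prefixIdeal_eq : prefixIdeal (fun i => (X (u i) : MvPolynomial σ K)) s =
      Ideal.span (X '' (u '' Set.Iio s)) := by rw [prefixIdeal, Set.image_image]
  simp only [prefixIdeal_eq, smul_eq_mul, Ideal.mul_top, mem_ideal_span_X_image,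
    Set.exists_mem_image] at ha ⊢
  intro b hb
  obtain ⟨i, hi, hbi⟩ := ha (Finsupp.single (u s) 1 + b) (by simpa [support_X_mul] using hb)
  have hne : u s ≠ u i := hu.ne hs (hi.trans hs) (ne_of_gt hi)
  exact ⟨i, hi, by simpa [Finsupp.single_apply, hne] using hbi⟩

variable {ι : Type*} {y : ℕ → MvPolynomial σ K} {m : ℕ}

theorem gradedProj_smul [Finite ι] (deg : ι → ℕ) (D : ℕ) {x : MvPolynomial σ K}
    (hx : x.IsHomogeneous 1) (v : ι → MvPolynomial σ K) :
    gradedProj deg D (x • v) = x • gradedProj (fun p => deg p + 1) D v := by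
  have hgraded : IsGradedMap (fun p => deg p + 1) deg
      (x • LinearMap.id : (ι → MvPolynomial σ K) →ₗ[MvPolynomial σ K] _) := fun D v hv =>
    IsGradedMap.smul_apply_mem (f := LinearMap.id) (fun _ _ h => h) hx hv
  exact (hgraded.map_gradedProj D v).symm

theorem gradedProj_add_right (deg : ι → ℕ) (D e : ℕ) :
    gradedProj (σ := σ) (K := K) (fun p => deg p + e) (D + e) = gradedProj deg D := by
  ext v p
  simp [gradedProj_apply, Nat.add_sub_add_right]

theorem gradedProj_mem_prefixIdeal [Finite ι] (hy : ∀ i, (y i).IsHomogeneous 1) (s : ℕ)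
    (deg : ι → ℕ) (D : ℕ) {v : ι → MvPolynomial σ K}
    (hv : v ∈ prefixIdeal y s • (⊤ : Submodule (MvPolynomial σ K) (ι → MvPolynomial σ K))) :
    gradedProj deg D v ∈
      prefixIdeal y s • (⊤ : Submodule (MvPolynomial σ K) (ι → MvPolynomial σ K)) := by
  induction s generalizing deg v with
  | zero => simp_all [prefixIdeal_zero]
  | succ s ih =>
    obtain ⟨u, hu⟩ := mem_prefixIdeal_succ_smul_top.1 hv
    refine mem_prefixIdeal_succ_smul_top.2 ⟨gradedProj (fun p => deg p + 1) D u, ?_⟩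
    rw [← gradedProj_smul deg D (hy s), ← map_sub]
    exact ih deg hu

theorem IsZigzag.gradedProj {ι : ℕ → Type} [∀ i, Finite (ι i)] {deg : ∀ i, ι i → ℕ}
    {d : ∀ i, (ι (i + 1) → MvPolynomial σ K) →ₗ[MvPolynomial σ K] (ι i → MvPolynomial σ K)}
    (hd : ∀ i, IsGradedMap (deg (i + 1)) (deg i) (d i)) (hy : ∀ i, (y i).IsHomogeneous 1)
    {a : ∀ i, ι i → MvPolynomial σ K} (ha : IsZigzag d y m a) (E : ℕ) :
    IsZigzag d y m fun i => gradedProj (deg i) (E + i) (a i) := by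
  intro s hs
  beta_reduce
  rw [← add_assoc, (hd s).map_gradedProj, ← gradedProj_add_right (deg s) (E + s) 1,
    ← gradedProj_smul _ _ (hy s), ← map_sub]
  exact gradedProj_mem_prefixIdeal hy s (deg s) (E + s + 1) (ha s hs)

theorem IsZigzag.map {R R' : Type*} [CommRing R] [CommRing R'] {y : ℕ → R}
    {y' : ℕ → R'} {ι : ℕ → Type*} [∀ i, Fintype (ι i)]
    {d : ∀ i, (ι (i + 1) → R) →ₗ[R] (ι i → R)}
    {a : ∀ i, ι i → R} (ha : IsZigzag d y m a) {φ : R →+* R'} (hφ : ∀ i < m, φ (y i) = y' i) :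
    IsZigzag (fun i => baseChange φ (d i)) y' m fun i => φ ∘ a i := by
  intro s hs
  have hmap : (prefixIdeal y s).map φ = prefixIdeal y' s := by
    rw [prefixIdeal, prefixIdeal, Ideal.map_span, Set.image_image]
    exact congrArg _ (Set.image_congr fun i hi => hφ i (hi.trans hs))
  rw [mem_smul_top_pi_iff]
  intro p
  simpa [baseChange_comp, hmap, hφ s hs] using
    Ideal.mem_map_of_mem φ (mem_smul_top_pi_iff.1 (ha s hs) p)

theorem RegLE.map_mem_map {J : Ideal (MvPolynomial σ K)} {r E : ℕ} (hJ : RegLE J r)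
    (hrE : r ≤ E) (hm : 0 < m) (hy : ∀ i, (y i).IsHomogeneous 1)
    (hreg : IsWeaklyRegularOn (MvPolynomial σ K) y m)
    {φ : MvPolynomial σ K →+* MvPolynomial σ K} (hφy : ∀ i < m, φ (y i) = y i)
    (hφX : ∀ v, φ (X v) ∈ prefixIdeal y m) {g : MvPolynomial σ K} (hg : g.IsHomogeneous E)
    (hyg : ∀ i < m, y i * g ∈ J) : φ g ∈ J.map φ := by
  obtain ⟨F, hF⟩ := hJ
  obtain ⟨a, ha, ha0⟩ := exists_isZigzag (N := fun i => prepend Unit F.ι i → MvPolynomial σ K)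
    (d := F.d) F.exact (fun _ => hreg.pi) (g := fun _ => g)
    (fun i hi => (F.mem_range_d_zero _).2 (hyg i hi))
  have hb := (ha.gradedProj (deg := prependDeg (fun _ => 0) F.deg) F.isGradedMap_d hy E).map hφy
  have top_mem : φ ∘ gradedProj (prependDeg (fun _ => 0) F.deg m) (E + m) (a m) ∈
      prefixIdeal y m • (⊤ : Submodule (MvPolynomial σ K) _) := by
    obtain ⟨t, rfl⟩ := Nat.exists_eq_add_of_le' hm
    refine mem_smul_top_pi_iff.2 fun p => ?_
    have hdeg : F.deg t p < E + (t + 1) := by linarith [hF t p]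
    exact map_mem_of_isHomogeneous hφX
      (isHomogeneous_of_mem_gradedPart (gradedProj_mem _ _ _) p) (Nat.sub_ne_zero_of_lt hdeg)
  obtain ⟨w, hw⟩ := hb.mem_range (fun i => baseChange_baseChange (F.d_d i) φ)
    (fun _ => hreg.pi) top_mem
  have hgw : baseChange φ (F.d 0) w () = φ g := by
    have hg0 : a 0 ∈ gradedPart (prependDeg (fun _ => 0) F.deg 0) E :=
      mem_gradedPart.2 fun _ _ => ⟨E.zero_le, ha0 ▸ hg⟩
    rw [hw]
    rw [add_zero, gradedProj_of_mem hg0, if_pos rfl, ha0, Function.comp_apply]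
  rw [← hgw]
  exact baseChange_apply_mem_map (fun v => (F.mem_range_d_zero _).1 ⟨v, rfl⟩) φ w

end LowerBound

section Retraction

variable {V : Type*} {G : SimpleGraph V} {M N : Finset (Sym2 V)} {B : Finset V} {ρ : V → V}
  {m : ℕ}

-- Keep `m` of the colours, recolour the other vertices by one of these, and represent each
-- colour by one of its vertices.
theorem IsComponentColouring.exists_retraction {α : Type*} [DecidableEq α] {c : V → α}
    (hc : IsComponentColouring G B c) (hm : 0 < m) (hcard : m ≤ (B.image c).card) :
    ∃ ρ : V → V, IsComponentColouring G B ρ ∧ B.image ρ ⊆ B ∧ (B.image ρ).card = m ∧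
      ∀ v ∈ B.image ρ, ρ v = v := by
  obtain ⟨D, hDB, hD⟩ := Finset.exists_subset_card_eq hcard
  obtain ⟨i₀, hi₀⟩ := Finset.card_pos.1 (hm.trans_eq hD.symm)
  have exists_rep : ∀ i : D, ∃ v ∈ B, c v = i := fun i => Finset.mem_image.1 (hDB i.2)
  choose rep hrepB hcrep using exists_rep
  let ρ (v : V) : V := if h : c v ∈ D then rep ⟨c v, h⟩ else rep ⟨i₀, hi₀⟩
  have hρ (v : V) : ∃ i : D, ρ v = rep i := by
    by_cases h : c v ∈ D
    exacts [⟨_, dif_pos h⟩, ⟨_, dif_neg h⟩]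
  have hρrep (i : D) : ρ (rep i) = rep i := by
    simp [ρ, hcrep]
  have himage : B.image ρ = Finset.univ.image rep := by
    ext v
    simp only [Finset.mem_image, Finset.mem_univ, true_and]
    constructor
    · rintro ⟨w, -, rfl⟩
      exact (hρ w).imp fun i hi => hi.symm
    · rintro ⟨i, rfl⟩
      exact ⟨rep i, hrepB i, hρrep i⟩
  have hrep_inj : Function.Injective rep := fun i j hij =>
    Subtype.ext (by rw [← hcrep i, ← hcrep j, hij])
  refine ⟨ρ, fun x hx y hy hxy => ?_, ?_, ?_, ?_⟩
  · simp only [ρ, hc x hx y hy hxy]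
  · rw [himage]
    exact Finset.image_subset_iff.2 fun i _ => hrepB i
  · rw [himage, Finset.card_image_of_injective _ hrep_inj, Finset.card_univ, Fintype.card_coe, hD]
  · rw [himage]
    exact Finset.forall_mem_image.2 fun i _ => hρrep i

theorem _root_.IsMatchingSet.card_edgeVerts (hM : IsMatchingSet G M) :
    (edgeVerts M).card = 2 * M.card := by
  rw [edgeVerts, Finset.card_biUnion hM.pairwiseDisjoint, mul_comm]
  exact Finset.sum_const_nat fun e he =>
    Sym2.card_toFinset_of_not_isDiag e (G.not_isDiag_of_mem_edgeSet (hM.1 e he))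

theorem IsComponentColouring.anti {α : Type*} {A : Finset V} {c : V → α}
    (hc : IsComponentColouring G B c) (h : A ⊆ B) : IsComponentColouring G A c :=
  fun x hx y hy => hc x (h hx) y (h hy)

theorem _root_.IsMatchingSet.even_card_filter_edgeVerts {α : Type*} [DecidableEq α] {c : V → α}
    (hM : IsMatchingSet G M) (hc : IsComponentColouring G (edgeVerts M) c) (i : α) :
    Even ((edgeVerts M).filter (c · = i)).card := by
  have hverts : (edgeVerts M).filter (c · = i) = edgeVerts (colourClass M c i) := by
    ext v
    simp only [Finset.mem_filter, mem_edgeVerts]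
    constructor
    · rintro ⟨⟨e, he, hve⟩, rfl⟩
      exact ⟨e, hM.mem_colourClass hc he hve, hve⟩
    · rintro ⟨e, he, hve⟩
      exact ⟨⟨e, (mem_colourClass.1 he).1, hve⟩, (mem_colourClass.1 he).2 v hve⟩
  rw [hverts, (hM.anti (N := colourClass M c i) (Finset.filter_subset _ _)).card_edgeVerts]
  exact even_two_mul _

-- Both fibres have an even number of vertices, so they differ by at least `2` for every colour.
theorem _root_.IsMatchingSet.card_add_card_image_le {α : Type*} [DecidableEq α] {c : V → α}
    (hM : IsMatchingSet G M) (hN : IsMatchingSet G N) (hNM : edgeVerts N ⊆ edgeVerts M)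
    (hc : IsComponentColouring G (edgeVerts M) c)
    (hlt : ∀ i ∈ (edgeVerts M).image c,
      ((edgeVerts N).filter (c · = i)).card < ((edgeVerts M).filter (c · = i)).card) :
    N.card + ((edgeVerts M).image c).card ≤ M.card := by
  have hN_fibres := Finset.card_eq_sum_card_fiberwise (f := c) (s := edgeVerts N)
    (t := (edgeVerts M).image c) fun v hv => Finset.mem_coe.2 (Finset.mem_image_of_mem c (hNM hv))
  have hM_fibres := Finset.card_eq_sum_card_image c (edgeVerts M)
  have hfibre : ∀ i ∈ (edgeVerts M).image c, ((edgeVerts N).filter (c · = i)).card + 2 ≤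
      ((edgeVerts M).filter (c · = i)).card := fun i hi => by
    obtain ⟨a, ha⟩ := hM.even_card_filter_edgeVerts hc i
    obtain ⟨b, hb⟩ := hN.even_card_filter_edgeVerts (hc.anti hNM) i
    have := hlt i hi
    omega
  have hsum := Finset.sum_le_sum hfibre
  rw [Finset.sum_add_distrib, ← hN_fibres, ← hM_fibres, Finset.sum_const, smul_eq_mul,
    hM.card_edgeVerts, hN.card_edgeVerts] at hsum
  omega

end Retraction

section Collapse

variable {σ τ K : Type*} [CommRing K] {A B : Finset σ} {ρ : σ → τ} {Q : Set (Finset σ)}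

variable (K) in
/-- The specialization sending `X v` to `X (ρ v)` for `v ∈ A` and to `0` otherwise. -/
def collapse (A : Finset σ) (ρ : σ → τ) : MvPolynomial σ K →ₐ[K] MvPolynomial τ K :=
  aeval fun v => if v ∈ A then X (ρ v) else 0

theorem collapse_X_of_mem {v : σ} (hv : v ∈ A) : collapse K A ρ (X v) = X (ρ v) := by
  rw [collapse, aeval_X, if_pos hv]

theorem collapse_X_of_notMem {v : σ} (hv : v ∉ A) : collapse K A ρ (X v) = 0 := by
  rw [collapse, aeval_X, if_neg hv]

theorem collapse_prod_X (hB : B ⊆ A) :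
    collapse K A ρ (∏ v ∈ B, X v) = monomial (∑ v ∈ B, Finsupp.single (ρ v) 1) 1 := by
  rw [map_prod, monomial_sum_one]
  exact Finset.prod_congr rfl fun v hv => collapse_X_of_mem (hB hv)

theorem map_collapse_squarefreeIdeal_le :
    (squarefreeIdeal K Q).map (collapse K A ρ) ≤ Ideal.span ((fun d => monomial d (1 : K)) ''
      ((fun N => ∑ v ∈ N, Finsupp.single (ρ v) 1) '' {N | N ∈ Q ∧ N ⊆ A})) := by
  rw [squarefreeIdeal, Ideal.map_span, Ideal.span_le, Set.image_image, Set.image_subset_iff]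
  intro N hN
  by_cases hNA : N ⊆ A
  · exact Ideal.subset_span ⟨_, ⟨N, ⟨hN, hNA⟩, rfl⟩, (collapse_prod_X hNA).symm⟩
  · obtain ⟨v, hvN, hvA⟩ := Finset.not_subset.1 hNA
    have hzero : collapse K A ρ (∏ v ∈ N, X v) = 0 := by
      rw [map_prod, Finset.prod_eq_zero hvN (collapse_X_of_notMem hvA)]
    exact (congrArg (· ∈ Ideal.span _) hzero).mpr (zero_mem _)

theorem exists_card_filter_le_of_collapse_prod_X_mem [Nontrivial K] (hB : B ⊆ A)
    (h : collapse K A ρ (∏ v ∈ B, X v) ∈ (squarefreeIdeal K Q).map (collapse K A ρ)) :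
    ∃ N ∈ Q, N ⊆ A ∧ ∀ t, (N.filter (ρ · = t)).card ≤ (B.filter (ρ · = t)).card := by
  have sum_apply (C : Finset σ) (t : τ) :
      (∑ v ∈ C, Finsupp.single (ρ v) 1) t = (C.filter (ρ · = t)).card := by
    simp [Finsupp.finsetSum_apply, Finsupp.single_apply]
  rw [collapse_prod_X hB] at h
  obtain ⟨_, ⟨N, ⟨hN, hNA⟩, rfl⟩, hle⟩ := mem_ideal_span_monomial_image.1
    (map_collapse_squarefreeIdeal_le h) (∑ v ∈ B, Finsupp.single (ρ v) 1) (by simp)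
  exact ⟨N, hN, hNA, fun t => by simpa only [sum_apply] using hle t⟩

-- The variables in `D` kill `∏ v ∈ A \ D, X v` modulo the ideal, and the collapse fixes them.
theorem RegLE.exists_card_filter_le [Nontrivial K] {D : Finset σ} {ρ : σ → σ} {r : ℕ}
    (hr : RegLE (squarefreeIdeal K Q) r) (hDA : D ⊆ A) (hD : D.Nonempty) (hρA : ∀ v ∈ A, ρ v ∈ D)
    (hρD : ∀ v ∈ D, ρ v = v) (hmul : ∀ x ∈ D, X x * ∏ v ∈ A \ D, X v ∈ squarefreeIdeal K Q)
    (hdeg : r ≤ (A \ D).card) :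
    ∃ N ∈ Q, N ⊆ A ∧ ∀ t, (N.filter (ρ · = t)).card ≤ ((A \ D).filter (ρ · = t)).card := by
  obtain ⟨u, hu⟩ : ∃ u : ℕ → σ, Set.BijOn u (Set.Iio D.card) D := by
    have : Nonempty σ := hD.nonempty
    refine (Set.finite_Iio D.card).exists_bijOn_of_encard_eq ?_
    rw [← Finset.coe_Iio, Set.encard_coe_eq_coe_finsetCard, Set.encard_coe_eq_coe_finsetCard,
      Nat.card_Iio]
  have X_mem_prefixIdeal : ∀ v ∈ D,
      (X v : MvPolynomial σ K) ∈ prefixIdeal (fun i => X (u i)) D.card := fun v hv => by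
    obtain ⟨i, hi, rfl⟩ := hu.surjOn hv
    exact apply_mem_prefixIdeal hi
  refine exists_card_filter_le_of_collapse_prod_X_mem Finset.sdiff_subset
    (hr.map_mem_map (φ := (collapse K A ρ).toRingHom) hdeg hD.card_pos
      (fun i => isHomogeneous_X K (u i)) (isWeaklyRegularOn_X hu.injOn) (fun i hi => ?_)
      (fun v => ?_) ?_ fun i hi => hmul _ (hu.mapsTo hi))
  · exact (collapse_X_of_mem (hDA (hu.mapsTo hi))).trans (congrArg X (hρD _ (hu.mapsTo hi)))
  · by_cases hv : v ∈ A
    · exact (collapse_X_of_mem (K := K) hv).symm ▸ X_mem_prefixIdeal _ (hρA v hv)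
    · exact (collapse_X_of_notMem (K := K) hv).symm ▸ zero_mem _
  · simpa using IsHomogeneous.prod (A \ D) (X (R := K)) (fun _ => 1) fun v _ => isHomogeneous_X K v

end Collapse

section ForestLowerBound

variable {V K : Type*} [CommRing K] {G : SimpleGraph V} {M : Finset (Sym2 V)} {k r : ℕ}

theorem X_mul_prod_sdiff_mem {A D : Finset V} {x : V} (hA : HasMatching G A (k + (D.card - 1)))
    (hDA : D ⊆ A) (hx : x ∈ D) :
    X x * ∏ v ∈ A \ D, X v ∈ squarefreeIdeal K {B | HasMatching G B k} := by
  have hx_notMem : x ∉ A \ D := fun h => (Finset.mem_sdiff.1 h).2 hx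
  rw [← Finset.prod_insert hx_notMem, ← Finset.sdiff_erase (hDA hx)]
  rw [← Finset.card_erase_of_mem hx] at hA
  exact prod_X_mem_squarefreeIdeal hA.sdiff

theorem card_add_le_of_regLE_of_retraction [Nontrivial K] {D : Finset V} {ρ : V → V}
    (hM : IsMatchingSet G M) (hρ : IsComponentColouring G (edgeVerts M) ρ)
    (hD : (edgeVerts M).image ρ = D) (hDM : D ⊆ edgeVerts M) (hρD : ∀ v ∈ D, ρ v = v)
    (hpos : 0 < D.card) (hcard : M.card + 1 = D.card + k)
    (hr : RegLE (squarefreeIdeal K {A | HasMatching G A k}) r) : M.card + k ≤ r := by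
  by_contra! hlt
  have hdeg : r ≤ (edgeVerts M \ D).card := by
    have := (Finset.card_sdiff_add_card_eq_card hDM).trans hM.card_edgeVerts
    omega
  obtain ⟨N, ⟨N', hN', hN'N, hk⟩, hNM, hfibre⟩ := hr.exists_card_filter_le hDM
    (Finset.card_pos.1 hpos) (fun v hv => hD ▸ Finset.mem_image_of_mem ρ hv) hρD
    (fun x hx => X_mul_prod_sdiff_mem (hM.hasMatching subset_rfl (by omega)) hDM hx) hdeg
  have hle : N'.card + ((edgeVerts M).image ρ).card ≤ M.card := by
    refine hM.card_add_card_image_le hN' (hN'N.trans hNM) hρ fun t ht => ?_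
    rw [hD] at ht
    calc ((edgeVerts N').filter (ρ · = t)).card
      _ ≤ (N.filter (ρ · = t)).card := Finset.card_le_card (Finset.filter_subset_filter _ hN'N)
      _ ≤ ((edgeVerts M \ D).filter (ρ · = t)).card := hfibre t
      _ < ((edgeVerts M).filter (ρ · = t)).card := Finset.card_lt_card <|
        (Finset.ssubset_iff_of_subset (Finset.filter_subset_filter _ Finset.sdiff_subset)).2
          ⟨t, Finset.mem_filter.2 ⟨hDM ht, hρD t ht⟩, fun h =>
            (Finset.mem_sdiff.1 (Finset.mem_filter.1 h).1).2 ht⟩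
  rw [hD, hk] at hle
  omega

theorem card_add_le_of_regLE_squarefreeIdeal [Nontrivial K] (hM : IsAdmissibleMatching G k M)
    (hk : k ≤ M.card) (hr : RegLE (squarefreeIdeal K {A | HasMatching G A k}) r) :
    M.card + k ≤ r := by
  obtain ⟨c, hc, hcard⟩ := hM.exists_isComponentColouring
  obtain ⟨ρ, hρ, hρM, hρcard, hfix⟩ :=
    hc.exists_retraction (m := M.card + 1 - k) (by omega) (by omega)
  exact card_add_le_of_regLE_of_retraction hM.1 hρ rfl hρM hfix (by omega) (by omega) hr

end ForestLowerBound

section Main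

variable {K : Type*} [Field K] {n : ℕ} {G : SimpleGraph (Fin n)} {k r : ℕ}

theorem exists_card_eq_sSup {α : Type*} [Finite α] {P : Finset α → Prop} (h : ∃ s, P s) :
    ∃ s, P s ∧ s.card = sSup {m | ∃ s, P s ∧ s.card = m} :=
  let ⟨s, hs⟩ := h
  Nat.sSup_mem (s := {m | ∃ s, P s ∧ s.card = m}) ⟨s.card, s, hs, rfl⟩ (bddAbove_card P)

theorem exists_isAdmissibleMatching_card_eq {V : Type*} [Fintype V] {G : SimpleGraph V}
    (hG : G.IsAcyclic) (hk : 1 ≤ k) (hν : k ≤ matchingNumber G) :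
    ∃ M, IsAdmissibleMatching G k M ∧ M.card = k := by
  obtain ⟨M, hM, hMν⟩ := exists_card_eq_sSup (P := IsMatchingSet G) ⟨∅, by simp [IsMatchingSet]⟩
  obtain ⟨N, hNM, hN⟩ := Finset.exists_subset_card_eq (hν.trans_eq hMν.symm)
  have hNG : IsMatchingSet G N := hM.anti hNM
  have hverts : (edgeVerts N).Nonempty :=
    Finset.card_pos.1 (hNG.card_edgeVerts ▸ by omega)
  refine ⟨N, hNG.isAdmissibleMatching hG (c := fun _ => ()) (fun _ _ _ _ _ => rfl) ?_, hN⟩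
  rw [Finset.image_const hverts, Finset.card_singleton, hN, add_comm]

theorem le_of_regLE_edgeIdealSqPow (hG : G.IsAcyclic) (hk : 1 ≤ k) (hν : k ≤ matchingNumber G)
    (hr : RegLE (edgeIdealSqPow K G k) r) : aim G k + k ≤ r := by
  obtain ⟨N, hN, hNk⟩ := exists_isAdmissibleMatching_card_eq hG hk hν
  obtain ⟨M, hM, hMaim⟩ := exists_card_eq_sSup (P := IsAdmissibleMatching G k) ⟨N, hN⟩
  rw [edgeIdealSqPow_eq_squarefreeIdeal] at hr
  have hkM : k ≤ M.card := hNk.symm.trans_le ((card_le_aim hN).trans_eq hMaim.symm)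
  exact (congrArg (· + k) hMaim).symm.trans_le (card_add_le_of_regLE_squarefreeIdeal hM hkM hr)

end Main

end SquarefreePower

/-- For a forest `G`, `reg(I(G)^{[k]}) = aim(G,k) + k` for all `1 ≤ k ≤ ν(G)`. -/
theorem stmt_17 (K : Type*) [Field K] {n : ℕ} (G : SimpleGraph (Fin n))
    (hforest : G.IsAcyclic)
    (k : ℕ) (h1 : 1 ≤ k) (h2 : k ≤ matchingNumber G) :
    reg (edgeIdealSqPow K G k) = aim G k + k := by
  have hupper := SquarefreePower.regLE_edgeIdealSqPow (K := K) (k := k) hforest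
  exact SquarefreePower.reg_eq_of_regLE hupper fun _ hr =>
    SquarefreePower.le_of_regLE_edgeIdealSqPow hforest h1 h2 hr

end
end

section
/- If G is a graph whose edge ideal I(G) = (x_1x_2, x_3x_4, ..., x_{n-1}x_n) is a complete intersection of n/2 quadrics in disjoint variables, then for all 1 ≤ k ≤ n/2, depth(S/I(G)^{[k]}) = n/2 + 2k - 1 - k·0, i.e., g_{I(G)}(k) = n/2 - k. -/
open scoped Classical
open MvPolynomial RingTheory

noncomputable section

/-- The graded maximal ideal `(x_1, …, x_n)` of the polynomial ring. -/
def maxIdeal (K : Type*) [Field K] (n : ℕ) : Ideal (MvPolynomial (Fin n) K) :=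
  Ideal.span (Set.range X)

/-- The depth of `S/I` : the maximum length of an `S/I`-regular sequence contained in
the graded maximal ideal. -/
def depthQuot {K : Type*} [Field K] {n : ℕ} (I : Ideal (MvPolynomial (Fin n) K)) : ℕ :=
  sSup {d | ∃ rs : List (MvPolynomial (Fin n) K), rs.length = d ∧
    (∀ r ∈ rs, r ∈ maxIdeal K n) ∧
    RingTheory.Sequence.IsRegular (MvPolynomial (Fin n) K ⧸ I) rs}

/-- The normalized depth function of the edge ideal of `G`:
`g_{I(G)}(k) = depth(S/I(G)^{[k]}) - (2k-1)`. -/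
def gEdge (K : Type*) [Field K] {n : ℕ} (G : SimpleGraph (Fin n)) (k : ℕ) : ℤ :=
  (depthQuot (edgeIdealSqPow K G k) : ℤ) - (2 * k - 1)

/-!
The squarefree power `I(G)^{[k]}` of a disjoint union of edges and isolated vertices is the
Stanley–Reisner ideal of the independence complex of a matroid: a squarefree monomial `x_A` lies
outside it exactly when `A` contains fewer than `k` edges, i.e. when `A` has nullity at most `k - 1`
in the partition matroid whose blocks are the connected components. If there are `c` components,
this matroid has rank `r = c + k - 1`, and it remains to see that its face ring has depth `r`.

The elementary symmetric polynomials `e_r, …, e_1` form a regular sequence on the face ring of any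
matroid of rank `r`. For a vertex `a`, the exact sequence
`0 → R/(I : x_a) → R/I → R/(I + (x_a)) → 0` reduces this to the star and the deletion of `a`, and
eventually to full simplices, where `e_r` acts as the product of all variables. Conversely, the
depth is at most the dimension, and a prime containing `I` contains every variable outside some
independent set, so the dimension is at most `r`.
-/
section RegularSequence

variable {R : Type*} [CommRing R]

theorem isWeaklyRegular_of_subsingleton (M : Type*) [AddCommGroup M] [Module R M] [Subsingleton M]
    (rs : List R) : Sequence.IsWeaklyRegular M rs :=
  ⟨fun _ _ => Function.injective_of_subsingleton _⟩

theorem isWeaklyRegular_of_exact {M N P : Type*} [AddCommGroup M] [AddCommGroup N]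
    [AddCommGroup P] [Module R M] [Module R N] [Module R P] {f : M →ₗ[R] N} {g : N →ₗ[R] P}
    (hf : Function.Injective f) (hfg : Function.Exact f g) (hg : Function.Surjective g)
    {rs : List R} (hM : Sequence.IsWeaklyRegular M rs) (hP : Sequence.IsWeaklyRegular P rs) :
    Sequence.IsWeaklyRegular N rs := by
  induction rs generalizing M N P with
  | nil => exact .nil R N
  | cons r rs ih =>
    rw [Sequence.isWeaklyRegular_cons_iff] at hM hP ⊢
    have hzero : Function.Exact (0 : PUnit →ₗ[R] M) f := by
      rw [LinearMap.exact_zero_iff_injective]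
      exact hf
    have hmap : Function.Injective (QuotSMulTop.map r f) := by
      rw [← LinearMap.exact_zero_iff_injective (QuotSMulTop r PUnit)]
      have := QuotSMulTop.map_first_exact_on_four_term_exact_of_isSMulRegular_last hzero hfg hP.1
      rwa [map_zero] at this
    exact ⟨isSMulRegular_of_range_eq_ker hf hfg.linearMap_ker_eq.symm hM.1 hP.1,
      ih hmap (QuotSMulTop.map_exact r hfg hg) (QuotSMulTop.map_surjective r hg) hM.2 hP.2⟩

theorem isWeaklyRegular_quotient_of_colon {I : Ideal R} (a : R) {rs : List R}
    (hcolon : Sequence.IsWeaklyRegular (R ⧸ I.colon {a}) rs)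
    (hsup : Sequence.IsWeaklyRegular (R ⧸ I ⊔ Ideal.span {a}) rs) :
    Sequence.IsWeaklyRegular (R ⧸ I) rs := by
  have hle : I.colon {a} ≤ Submodule.comap (LinearMap.mulRight R a) I := fun f hf => by
    simpa [Submodule.mem_colon_singleton] using hf
  refine isWeaklyRegular_of_exact (f := Submodule.mapQ _ _ (LinearMap.mulRight R a) hle)
    (g := Submodule.factor le_sup_left) ?_ ?_ (Submodule.factor_surjective _) hcolon hsup
  · rw [injective_iff_map_eq_zero, (Submodule.mkQ_surjective _).forall]
    intro f hf
    rw [Submodule.mkQ_apply, Submodule.mapQ_apply, Submodule.Quotient.mk_eq_zero] at hf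
    rw [Submodule.mkQ_apply, Submodule.Quotient.mk_eq_zero, Submodule.mem_colon_singleton]
    simpa using hf
  · have hrange : LinearMap.range (LinearMap.mulRight R a) = Ideal.span {a} := by
      ext f
      simp [Ideal.mem_span_singleton']
    rw [LinearMap.exact_iff, Submodule.factor, Submodule.ker_mapQ, Submodule.range_mapQ, hrange,
      Submodule.comap_id, Submodule.map_sup, Submodule.mkQ_map_self, bot_sup_eq]

open Pointwise in
theorem isWeaklyRegular_quotient_cons_iff {I : Ideal R} {r : R} {rs : List R} :
    Sequence.IsWeaklyRegular (R ⧸ I) (r :: rs) ↔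
      (∀ f, r * f ∈ I → f ∈ I) ∧ Sequence.IsWeaklyRegular (R ⧸ I ⊔ Ideal.span {r}) rs := by
  have hsmul : r • (⊤ : Submodule R (R ⧸ I)) = Submodule.map I.mkQ (Ideal.span {r}) := by
    rw [← Submodule.ideal_span_singleton_smul, ← Submodule.range_mkQ I, LinearMap.range_eq_map,
      ← Submodule.map_smul'', smul_eq_mul, Ideal.mul_top]
  let e : QuotSMulTop r (R ⧸ I) ≃ₗ[R] R ⧸ I ⊔ Ideal.span {r} :=
    (Submodule.quotEquivOfEq _ _ hsmul).trans (Submodule.quotientQuotientEquivQuotientSup I _)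
  rw [Sequence.isWeaklyRegular_cons_iff, e.isWeaklyRegular_congr,
    isSMulRegular_iff_right_eq_zero_of_smul, (Submodule.mkQ_surjective I).forall]
  simp only [Submodule.mkQ_apply, ← Submodule.Quotient.mk_smul, Submodule.Quotient.mk_eq_zero,
    smul_eq_mul]

theorem isWeaklyRegular_quotient_cons_congr {I : Ideal R} {r r' : R} (h : r - r' ∈ I)
    {rs : List R} :
    Sequence.IsWeaklyRegular (R ⧸ I) (r :: rs) ↔ Sequence.IsWeaklyRegular (R ⧸ I) (r' :: rs) := by
  have hmk : algebraMap R (R ⧸ I) r = algebraMap R (R ⧸ I) r' := Ideal.Quotient.eq.2 h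
  rw [← Sequence.isWeaklyRegular_map_algebraMap_iff (R ⧸ I), List.map_cons, hmk, ← List.map_cons,
    Sequence.isWeaklyRegular_map_algebraMap_iff (R ⧸ I)]

theorem isRegular_quotient_of_isWeaklyRegular {I J : Ideal R} (hIJ : I ≤ J) (hJ : J ≠ ⊤)
    {rs : List R} (hrs : ∀ r ∈ rs, r ∈ J) (h : Sequence.IsWeaklyRegular (R ⧸ I) rs) :
    Sequence.IsRegular (R ⧸ I) rs := by
  refine ⟨h, fun htop => hJ ?_⟩
  have hmap : (⊤ : Submodule R (R ⧸ I)) = Submodule.map I.mkQ (Ideal.ofList rs) := by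
    rw [htop, ← Submodule.range_mkQ I, LinearMap.range_eq_map,
      ← Submodule.map_smul'', smul_eq_mul, Ideal.mul_top]
  have hsup : I ⊔ Ideal.ofList rs = ⊤ := by
    rw [← Submodule.comap_map_mkQ, ← hmap, Submodule.comap_top]
  exact top_unique (hsup ▸ sup_le hIJ (Ideal.span_le.2 hrs))

theorem length_le_supportDim_of_isRegular {M : Type*} [AddCommGroup M] [Module R M]
    [Module.Finite R M] {rs : List R} (h : Sequence.IsRegular M rs) :
    (rs.length : WithBot ℕ∞) ≤ Module.supportDim R M := by
  induction rs generalizing M with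
  | nil =>
    have := h.nontrivial
    have : Nonempty (Module.support R M) := Module.nonempty_support_of_nontrivial.to_subtype
    exact Order.krullDim_nonneg
  | cons r rs ih =>
    rw [Sequence.isRegular_cons_iff] at h
    calc ((r :: rs).length : WithBot ℕ∞) = rs.length + 1 := by simp
      _ ≤ Module.supportDim R (QuotSMulTop r M) + 1 := by gcongr; exact ih h.2
      _ ≤ Module.supportDim R M :=
        Module.supportDim_quotSMulTop_succ_le_of_notMem_minimalPrimes
          fun _ => h.1.notMem_of_mem_minimalPrimes

theorem ringKrullDim_quotient_le_of_forall_isPrime {I : Ideal R} {d : WithBot ℕ∞}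
    (h : ∀ p : Ideal R, p.IsPrime → I ≤ p → ringKrullDim (R ⧸ p) ≤ d) :
    ringKrullDim (R ⧸ I) ≤ d := by
  rw [ringKrullDim_quotient]
  refine iSup_le fun q => ?_
  let p := q.head.1
  let q' : LTSeries (PrimeSpectrum.zeroLocus (p.asIdeal : Set R)) :=
    { length := q.length
      toFun := fun i => ⟨q i, q.head_le i⟩
      step := q.step }
  calc (q.length : WithBot ℕ∞) ≤ Order.krullDim (PrimeSpectrum.zeroLocus (p.asIdeal : Set R)) :=
        Order.LTSeries.length_le_krullDim q'
    _ = ringKrullDim (R ⧸ p.asIdeal) := (ringKrullDim_quotient _).symm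
    _ ≤ d := h _ p.2 q.head.2

end RegularSequence

section StanleyReisner

variable {σ R : Type*} [CommRing R]

variable (R) in
/-- The Stanley–Reisner ideal of a simplicial complex `Δ`, generated by the squarefree monomials
of its nonfaces. Faces are finsets, and a simplicial complex is a set `Δ` with `IsLowerSet Δ`. -/
def stanleyReisnerIdeal (Δ : Set (Finset σ)) : Ideal (MvPolynomial σ R) :=
  Ideal.span ((fun A => ∏ v ∈ A, X v) '' Δᶜ)

variable (R) in
/-- The face ring, or Stanley–Reisner ring, of a simplicial complex. -/
abbrev FaceRing (Δ : Set (Finset σ)) : Type _ :=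
  MvPolynomial σ R ⧸ stanleyReisnerIdeal R Δ

variable {Δ : Set (Finset σ)}

theorem prod_X_mem_stanleyReisnerIdeal {A : Finset σ} (hA : A ∉ Δ) :
    ∏ v ∈ A, X v ∈ stanleyReisnerIdeal R Δ :=
  Ideal.subset_span ⟨A, hA, rfl⟩

theorem stanleyReisnerIdeal_empty : stanleyReisnerIdeal R (∅ : Set (Finset σ)) = ⊤ := by
  rw [Ideal.eq_top_iff_one]
  simpa using prod_X_mem_stanleyReisnerIdeal (R := R) (Set.notMem_empty (∅ : Finset σ))

theorem isWeaklyRegular_faceRing_empty (rs : List (MvPolynomial σ R)) :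
    Sequence.IsWeaklyRegular (FaceRing R (∅ : Set (Finset σ))) rs := by
  have : Subsingleton (FaceRing R (∅ : Set (Finset σ))) :=
    Ideal.Quotient.subsingleton_iff.2 stanleyReisnerIdeal_empty
  exact isWeaklyRegular_of_subsingleton _ rs

theorem sum_single_one_le_iff_subset_support {A : Finset σ} {m : σ →₀ ℕ} :
    ∑ v ∈ A, Finsupp.single v 1 ≤ m ↔ A ⊆ m.support := by
  classical
  simp only [Finsupp.le_def, Finsupp.finsetSum_apply, Finsupp.single_apply, Finset.sum_ite_eq',
    Finset.subset_iff, Finsupp.mem_support_iff, ← Nat.one_le_iff_ne_zero]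
  refine forall_congr' fun v => ?_
  split_ifs with hv <;> simp [hv]

theorem mem_stanleyReisnerIdeal_iff (hΔ : IsLowerSet Δ) {f : MvPolynomial σ R} :
    f ∈ stanleyReisnerIdeal R Δ ↔ ∀ m ∈ f.support, m.support ∉ Δ := by
  have hmonomial : stanleyReisnerIdeal R Δ = Ideal.span ((fun m => monomial m (1 : R)) ''
      ((fun A : Finset σ => ∑ v ∈ A, Finsupp.single v 1) '' Δᶜ)) := by
    simp only [Set.image_image, monomial_sum_one]
    rfl
  rw [hmonomial, mem_ideal_span_monomial_image]
  simp only [Set.exists_mem_image, sum_single_one_le_iff_subset_support]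
  exact forall₂_congr fun m _ =>
    ⟨fun ⟨A, hA, hle⟩ hm => hA (hΔ hle hm), fun hm => ⟨m.support, hm, subset_rfl⟩⟩

theorem stanleyReisnerIdeal_sup_span_prod_X (A : Finset σ) :
    stanleyReisnerIdeal R Δ ⊔ Ideal.span {∏ v ∈ A, X v} =
      stanleyReisnerIdeal R {s ∈ Δ | ¬ A ⊆ s} := by
  refine le_antisymm (sup_le (Ideal.span_mono (Set.image_mono ?_)) ?_) (Ideal.span_le.2 ?_)
  · exact Set.compl_subset_compl.2 (Set.sep_subset _ _)
  · rw [Ideal.span_singleton_le_iff_mem]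
    exact prod_X_mem_stanleyReisnerIdeal fun h => h.2 subset_rfl
  · rintro _ ⟨B, hB, rfl⟩
    by_cases hBΔ : B ∈ Δ
    · have hAB : A ⊆ B := by_contra fun h => hB ⟨hBΔ, h⟩
      exact Ideal.mem_sup_right
        (Ideal.mem_span_singleton.2 (Finset.prod_dvd_prod_of_subset _ _ _ hAB))
    · exact Ideal.mem_sup_left (prod_X_mem_stanleyReisnerIdeal hBΔ)

variable [DecidableEq σ]

theorem isLowerSet_setOf_insert_mem (hΔ : IsLowerSet Δ) (a : σ) :
    IsLowerSet {s | insert a s ∈ Δ} := fun _ _ hts hs => hΔ (Finset.insert_subset_insert a hts) hs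

theorem X_mul_mem_stanleyReisnerIdeal_iff (hΔ : IsLowerSet Δ) {a : σ} {f : MvPolynomial σ R} :
    X a * f ∈ stanleyReisnerIdeal R Δ ↔ f ∈ stanleyReisnerIdeal R {s | insert a s ∈ Δ} := by
  rw [mem_stanleyReisnerIdeal_iff hΔ,
    mem_stanleyReisnerIdeal_iff (isLowerSet_setOf_insert_mem hΔ a), support_X_mul]
  simp only [Finset.forall_mem_map, addLeftEmbedding_apply]
  refine forall₂_congr fun m _ => ?_
  have hsupport : (Finsupp.single a 1 + m).support = insert a m.support := by
    ext v
    by_cases h : v = a <;> simp [h, eq_comm]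
  rw [hsupport, Set.mem_ofPred_eq]

theorem prod_X_mul_mem_stanleyReisnerIdeal_iff (hΔ : IsLowerSet Δ) {A : Finset σ}
    {f : MvPolynomial σ R} :
    (∏ v ∈ A, X v) * f ∈ stanleyReisnerIdeal R Δ ↔
      f ∈ stanleyReisnerIdeal R {s | A ∪ s ∈ Δ} := by
  induction A using Finset.induction_on generalizing Δ with
  | empty => simp
  | insert a A ha ih =>
    rw [Finset.prod_insert ha, mul_assoc, X_mul_mem_stanleyReisnerIdeal_iff hΔ,
      ih (isLowerSet_setOf_insert_mem hΔ a)]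
    simp only [Set.mem_ofPred_eq, Finset.insert_union]

theorem isWeaklyRegular_faceRing_of_star_of_deletion (hΔ : IsLowerSet Δ) (a : σ)
    {rs : List (MvPolynomial σ R)}
    (hstar : Sequence.IsWeaklyRegular (FaceRing R {s | insert a s ∈ Δ}) rs)
    (hdel : Sequence.IsWeaklyRegular (FaceRing R {s ∈ Δ | a ∉ s}) rs) :
    Sequence.IsWeaklyRegular (FaceRing R Δ) rs := by
  have hcolon : (stanleyReisnerIdeal R Δ).colon {X a} =
      stanleyReisnerIdeal R {s | insert a s ∈ Δ} := by
    ext f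
    rw [Submodule.mem_colon_singleton, smul_eq_mul, mul_comm, X_mul_mem_stanleyReisnerIdeal_iff hΔ]
  have hsup : stanleyReisnerIdeal R Δ ⊔ Ideal.span {X a} =
      stanleyReisnerIdeal R {s ∈ Δ | a ∉ s} := by
    simpa using stanleyReisnerIdeal_sup_span_prod_X (R := R) (Δ := Δ) {a}
  exact isWeaklyRegular_quotient_of_colon (X a) (hcolon ▸ hstar) (hsup ▸ hdel)

theorem isWeaklyRegular_faceRing_simplex_sdiff {F : Finset σ} {rs : List (MvPolynomial σ R)}
    (hfacet : ∀ a ∈ F, Sequence.IsWeaklyRegular (FaceRing R (Set.Iic (F.erase a))) rs)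
    {A : Finset σ} (hA : A ⊆ F) :
    Sequence.IsWeaklyRegular (FaceRing R {s ∈ Set.Iic F | ¬ A ⊆ s}) rs := by
  induction A using Finset.induction_on with
  | empty =>
    have hempty : {s ∈ Set.Iic F | ¬ ∅ ⊆ s} = ∅ := by simp
    rw [hempty]
    exact isWeaklyRegular_faceRing_empty rs
  | insert a A ha ih =>
    rw [Finset.insert_subset_iff] at hA
    have hstar : {s | insert a s ∈ {t ∈ Set.Iic F | ¬ insert a A ⊆ t}} =
        {s ∈ Set.Iic F | ¬ A ⊆ s} := by
      ext s
      simp [Finset.insert_subset_iff, Finset.subset_insert_iff_of_notMem ha, hA.1]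
    have hdel : {s ∈ {t ∈ Set.Iic F | ¬ insert a A ⊆ t} | a ∉ s} = Set.Iic (F.erase a) := by
      ext s
      simp only [Set.mem_Iic, Set.mem_ofPred_eq, Finset.insert_subset_iff, Finset.subset_erase]
      tauto
    refine isWeaklyRegular_faceRing_of_star_of_deletion ?_ a ?_ ?_
    · exact fun s t hts hs => ⟨hts.trans hs.1, fun hAt => hs.2 (hAt.trans hts)⟩
    · rw [hstar]
      exact ih hA.2
    · rw [hdel]
      exact hfacet a hA.1

end StanleyReisner

section ElementarySymmetric

variable (σ R : Type*) [Fintype σ] [CommRing R]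

/-- The sequence `e_d, …, e_1` of elementary symmetric polynomials, a parameter sequence for the
face ring of a complex of dimension `d - 1`. -/
def esymmList : ℕ → List (MvPolynomial σ R)
  | 0 => []
  | d + 1 => esymm σ R (d + 1) :: esymmList d

theorem length_esymmList (d : ℕ) : (esymmList σ R d).length = d := by
  induction d with
  | zero => rfl
  | succ d ih => rw [esymmList, List.length_cons, ih]

variable {σ R}

theorem esymm_card_sub_prod_X_mem_stanleyReisnerIdeal (F : Finset σ) :
    esymm σ R F.card - ∏ v ∈ F, X v ∈ stanleyReisnerIdeal R (Set.Iic F) := by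
  classical
  have hF : F ∈ Finset.powersetCard F.card Finset.univ := by simp [Finset.mem_powersetCard]
  rw [esymm, ← Finset.add_sum_erase _ _ hF, add_sub_cancel_left]
  refine Ideal.sum_mem _ fun A hA => prod_X_mem_stanleyReisnerIdeal fun hAF => ?_
  rw [Finset.mem_erase, Finset.mem_powersetCard] at hA
  exact hA.1 (Finset.eq_of_subset_of_card_le hAF hA.2.2.ge)

theorem isWeaklyRegular_faceRing_simplex (F : Finset σ) :
    Sequence.IsWeaklyRegular (FaceRing R (Set.Iic F)) (esymmList σ R F.card) := by
  classical
  obtain ⟨d, hd⟩ : ∃ d, F.card = d := ⟨_, rfl⟩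
  induction d generalizing F with
  | zero => exact hd ▸ .nil _ _
  | succ d ih =>
    have hcongr := esymm_card_sub_prod_X_mem_stanleyReisnerIdeal (R := R) F
    rw [hd] at hcongr ⊢
    rw [esymmList, isWeaklyRegular_quotient_cons_congr hcongr, isWeaklyRegular_quotient_cons_iff,
      stanleyReisnerIdeal_sup_span_prod_X]
    refine ⟨fun f hf => ?_, isWeaklyRegular_faceRing_simplex_sdiff (fun a ha => ?_) subset_rfl⟩
    · have hstar : {s | F ∪ s ∈ Set.Iic F} = Set.Iic F := by
        ext s
        simp [Finset.union_subset_iff]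
      rwa [prod_X_mul_mem_stanleyReisnerIdeal_iff (isLowerSet_Iic F), hstar] at hf
    · have hcard : (F.erase a).card = d := by rw [Finset.card_erase_of_mem ha, hd]; rfl
      exact hcard ▸ ih (F.erase a) hcard

end ElementarySymmetric

section Matroid

theorem indep_insert_of_not_spanning_sdiff {α : Type*} {M : Matroid α} {a : α} {F I : Set α}
    (hF : M.Spanning F) (hFa : ¬ M.Spanning (F \ {a})) (hI : M.Indep I) (hIF : I ⊆ F) :
    M.Indep (insert a I) := by
  obtain ⟨B, hB, hIB, hBF⟩ := hI.exists_isBase_subset_spanning hF hIF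
  have haB : a ∈ B := by_contra fun haB => hFa <|
    hB.spanning_of_superset (Set.subset_sdiff_singleton hBF haB)
      (Set.sdiff_subset.trans hF.subset_ground)
  exact hB.indep.subset (Set.insert_subset haB hIB)

variable {σ R : Type*} [DecidableEq σ] [CommRing R] {M : Matroid σ} {C F : Finset σ} {a : σ}

/-- The iterated star, at the vertices of `C`, of the complex of those independent sets of `M`
which are contained in `F`. -/
def indepStar (M : Matroid σ) (C F : Finset σ) : Set (Finset σ) :=
  {s | s ∪ C ⊆ F ∧ M.Indep ↑(s ∪ C)}

theorem isLowerSet_indepStar (M : Matroid σ) (C F : Finset σ) : IsLowerSet (indepStar M C F) :=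
  fun _ _ hts hs => ⟨(Finset.union_subset_union_left hts).trans hs.1,
    hs.2.subset (Finset.coe_subset.2 (Finset.union_subset_union_left hts))⟩

theorem star_indepStar : {s | insert a s ∈ indepStar M C F} = indepStar M (insert a C) F := by
  simp only [indepStar, Set.mem_ofPred_eq, Finset.insert_union, Finset.union_insert]

theorem deletion_indepStar (haC : a ∉ C) :
    {s ∈ indepStar M C F | a ∉ s} = indepStar M C (F.erase a) := by
  ext s
  simp only [indepStar, Set.mem_ofPred_eq, Finset.subset_erase, Finset.mem_union, haC, or_false]
  tauto

theorem indepStar_insert_of_not_spanning_erase (haF : a ∈ F) (hF : M.Spanning (F : Set σ))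
    (hFa : ¬ M.Spanning (F.erase a : Set σ)) : indepStar M (insert a C) F = indepStar M C F := by
  ext s
  simp only [indepStar, Set.mem_ofPred_eq, Finset.union_insert, Finset.coe_insert]
  constructor
  · rintro ⟨hsF, hs⟩
    exact ⟨(Finset.subset_insert a _).trans hsF, hs.subset (Set.subset_insert a _)⟩
  · rintro ⟨hsF, hs⟩
    rw [Finset.coe_erase] at hFa
    exact ⟨Finset.insert_subset haF hsF,
      indep_insert_of_not_spanning_sdiff hF hFa hs (Finset.coe_subset.2 hsF)⟩

theorem indepStar_self_of_indep (hF : M.Indep (F : Set σ)) : indepStar M F F = Set.Iic F := by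
  ext s
  constructor
  · exact fun hs => Finset.subset_union_left.trans hs.1
  · intro hs
    rw [indepStar, Set.mem_ofPred_eq, Finset.union_eq_right.2 hs]
    exact ⟨subset_rfl, hF⟩

theorem indepStar_self_of_not_indep (hF : ¬ M.Indep (F : Set σ)) : indepStar M F F = ∅ :=
  Set.eq_empty_of_forall_notMem fun _ hs =>
    hF (hs.2.subset (Finset.coe_subset.2 Finset.subset_union_right))

variable [Fintype σ] {r : ℕ}

theorem isWeaklyRegular_faceRing_indepStar_self (hr : M.eRank = r) (hF : M.Spanning (F : Set σ)) :
    Sequence.IsWeaklyRegular (FaceRing R (indepStar M F F)) (esymmList σ R r) := by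
  by_cases hindep : M.Indep (F : Set σ)
  · have hcard : F.card = r := by
      simpa [hr] using (hindep.isBase_of_spanning hF).encard_eq_eRank
    rw [indepStar_self_of_indep hindep, ← hcard]
    exact isWeaklyRegular_faceRing_simplex F
  · rw [indepStar_self_of_not_indep hindep]
    exact isWeaklyRegular_faceRing_empty _

theorem isWeaklyRegular_faceRing_indepStar (hr : M.eRank = r) (hCF : C ⊆ F)
    (hF : M.Spanning (F : Set σ)) :
    Sequence.IsWeaklyRegular (FaceRing R (indepStar M C F)) (esymmList σ R r) := by
  obtain ⟨d, hd⟩ : ∃ d, (F \ C).card = d := ⟨_, rfl⟩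
  induction d generalizing C F with
  | zero =>
    rw [Finset.card_eq_zero, Finset.sdiff_eq_empty_iff_subset] at hd
    obtain rfl := hCF.antisymm hd
    exact isWeaklyRegular_faceRing_indepStar_self hr hF
  | succ d ih =>
    obtain ⟨a, ha⟩ : (F \ C).Nonempty := Finset.card_pos.1 (by omega)
    obtain ⟨haF, haC⟩ := Finset.mem_sdiff.1 ha
    have hstar := ih (Finset.insert_subset haF hCF) hF
      (by rw [Finset.sdiff_insert, Finset.card_erase_of_mem ha, hd]; rfl)
    by_cases hFa : M.Spanning (F.erase a : Set σ)
    · have hdel := ih (Finset.subset_erase.2 ⟨hCF, haC⟩) hFa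
        (by rw [Finset.erase_sdiff_comm, Finset.card_erase_of_mem ha, hd]; rfl)
      rw [← star_indepStar] at hstar
      rw [← deletion_indepStar haC] at hdel
      exact isWeaklyRegular_faceRing_of_star_of_deletion (isLowerSet_indepStar M C F) a hstar hdel
    · exact indepStar_insert_of_not_spanning_erase haF hF hFa ▸ hstar

omit [DecidableEq σ] in
theorem isWeaklyRegular_faceRing_indep (hr : M.eRank = r) :
    Sequence.IsWeaklyRegular (FaceRing R {s : Finset σ | M.Indep ↑s}) (esymmList σ R r) := by
  have hground : M.Spanning (M.E.toFinset : Set σ) := by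
    rw [Set.coe_toFinset]
    exact M.ground_spanning
  have hfaces : {s : Finset σ | M.Indep ↑s} = indepStar M ∅ M.E.toFinset := by
    ext s
    simpa [indepStar] using Matroid.Indep.subset_ground
  exact hfaces ▸ isWeaklyRegular_faceRing_indepStar hr (Finset.empty_subset _) hground

end Matroid

section Depth

variable {K : Type*} [Field K]

theorem ringKrullDim_quotient_le_card {σ : Type*} [Finite σ] {I : Ideal (MvPolynomial σ K)}
    {A : Finset σ} (hA : ∀ v ∉ A, X v ∈ I) :
    ringKrullDim (MvPolynomial σ K ⧸ I) ≤ A.card := by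
  let g : MvPolynomial A K →ₐ[K] MvPolynomial σ K ⧸ I :=
    (Ideal.Quotient.mkₐ K I).comp (rename Subtype.val)
  have hX : ∀ v, Ideal.Quotient.mkₐ K I (X v) ∈ g.range := fun v => by
    by_cases hv : v ∈ A
    · exact ⟨X ⟨v, hv⟩, by simp [g]⟩
    · have hzero : Ideal.Quotient.mkₐ K I (X v) = 0 := Ideal.Quotient.eq_zero_iff_mem.2 (hA v hv)
      exact hzero ▸ g.range.zero_mem
  have hg : Function.Surjective g := by
    rw [← AlgHom.range_eq_top, eq_top_iff,
      ← (AlgHom.range_eq_top _).2 (Ideal.Quotient.mkₐ_surjective K I), ← Algebra.map_top,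
      ← MvPolynomial.adjoin_range_X, AlgHom.map_adjoin]
    refine Algebra.adjoin_le ?_
    rintro _ ⟨_, ⟨v, rfl⟩, rfl⟩
    exact hX v
  calc ringKrullDim (MvPolynomial σ K ⧸ I) ≤ ringKrullDim (MvPolynomial A K) :=
        ringKrullDim_le_of_surjective g.toRingHom hg
    _ = A.card := by
        rw [MvPolynomial.ringKrullDim_of_isNoetherianRing, ringKrullDim_eq_zero_of_field]
        simp

theorem ringKrullDim_faceRing_le {σ : Type*} [Finite σ] {Δ : Set (Finset σ)} {d : ℕ}
    (hΔ : ∀ A ∈ Δ, A.card ≤ d) : ringKrullDim (FaceRing K Δ) ≤ d := by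
  have := Fintype.ofFinite σ
  refine ringKrullDim_quotient_le_of_forall_isPrime fun p hp hle => ?_
  let A : Finset σ := {v | X v ∉ p}
  have hA : A ∈ Δ := by
    by_contra hA
    obtain ⟨v, hv, hvp⟩ := hp.prod_mem_iff.1 (hle (prod_X_mem_stanleyReisnerIdeal hA))
    exact (Finset.mem_filter.1 hv).2 hvp
  calc ringKrullDim (MvPolynomial σ K ⧸ p) ≤ A.card :=
        ringKrullDim_quotient_le_card fun v hv => by simpa [A] using hv
    _ ≤ d := by exact_mod_cast hΔ A hA

variable {n : ℕ}

theorem maxIdeal_ne_top : maxIdeal K n ≠ ⊤ := by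
  have hle : maxIdeal K n ≤ RingHom.ker (constantCoeff (σ := Fin n) (R := K)) :=
    Ideal.span_le.2 (by rintro _ ⟨v, rfl⟩; simp [RingHom.mem_ker])
  exact ne_top_of_le_ne_top (RingHom.ker_ne_top _) hle

theorem prod_X_mem_maxIdeal {A : Finset (Fin n)} (hA : A.Nonempty) :
    ∏ v ∈ A, X v ∈ maxIdeal K n := by
  obtain ⟨v, hv⟩ := hA
  exact Ideal.mem_of_dvd _ (Finset.dvd_prod_of_mem _ hv) (Ideal.subset_span ⟨v, rfl⟩)

theorem stanleyReisnerIdeal_le_maxIdeal {Δ : Set (Finset (Fin n))} (hΔ : ∅ ∈ Δ) :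
    stanleyReisnerIdeal K Δ ≤ maxIdeal K n := by
  refine Ideal.span_le.2 ?_
  rintro _ ⟨A, hA, rfl⟩
  refine prod_X_mem_maxIdeal (Finset.nonempty_iff_ne_empty.2 ?_)
  rintro rfl
  exact hA hΔ

theorem mem_maxIdeal_of_mem_esymmList {d : ℕ} {r : MvPolynomial (Fin n) K}
    (hr : r ∈ esymmList (Fin n) K d) : r ∈ maxIdeal K n := by
  induction d with
  | zero => exact absurd hr List.not_mem_nil
  | succ d ih =>
    obtain rfl | hr := List.mem_cons.1 hr
    · refine Ideal.sum_mem _ fun A hA => prod_X_mem_maxIdeal (Finset.card_pos.1 ?_)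
      rw [(Finset.mem_powersetCard.1 hA).2]
      exact d.succ_pos
    · exact ih hr

theorem depthQuot_eq_length {I : Ideal (MvPolynomial (Fin n) K)} (hI : I ≤ maxIdeal K n)
    {rs : List (MvPolynomial (Fin n) K)} (hmem : ∀ r ∈ rs, r ∈ maxIdeal K n)
    (hrs : Sequence.IsWeaklyRegular (MvPolynomial (Fin n) K ⧸ I) rs)
    (hdim : ringKrullDim (MvPolynomial (Fin n) K ⧸ I) ≤ rs.length) :
    depthQuot I = rs.length := by
  refine IsGreatest.csSup_eq
    ⟨⟨rs, rfl, hmem, isRegular_quotient_of_isWeaklyRegular hI maxIdeal_ne_top hmem hrs⟩, ?_⟩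
  rintro _ ⟨rs', rfl, -, hrs'⟩
  have hle := length_le_supportDim_of_isRegular hrs'
  rw [Module.supportDim_quotient_eq_ringKrullDim] at hle
  exact_mod_cast hle.trans hdim

theorem depthQuot_stanleyReisnerIdeal_indep {M : Matroid (Fin n)} {r : ℕ} (hr : M.eRank = r) :
    depthQuot (stanleyReisnerIdeal K {s : Finset (Fin n) | M.Indep ↑s}) = r := by
  have hempty : ∅ ∈ {s : Finset (Fin n) | M.Indep ↑s} := by simp
  have hdim : ringKrullDim (FaceRing K {s : Finset (Fin n) | M.Indep ↑s}) ≤ r :=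
    ringKrullDim_faceRing_le fun s hs => by
      have := hs.encard_le_eRank
      rw [hr, Set.encard_coe_eq_coe_finsetCard] at this
      exact_mod_cast this
  have hlength := length_esymmList (Fin n) K r
  rw [depthQuot_eq_length (stanleyReisnerIdeal_le_maxIdeal hempty)
    (fun _ => mem_maxIdeal_of_mem_esymmList) (isWeaklyRegular_faceRing_indep hr)
    (hlength.symm ▸ hdim), hlength]

end Depth

section BoundedNullity

variable {σ ι : Type*} [DecidableEq ι] {f : σ → ι} {c : ℕ} {s t : Finset σ}

theorem card_le_card_image_add_of_subset (hst : s ⊆ t) (ht : t.card ≤ (t.image f).card + c) :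
    s.card ≤ (s.image f).card + c := by
  classical
  have himage : t.image f ⊆ s.image f ∪ (t \ s).image f := by
    rw [← Finset.image_union, Finset.union_sdiff_of_subset hst]
  have himage_card := (Finset.card_le_card himage).trans (Finset.card_union_le _ _)
  have hsdiff_image : ((t \ s).image f).card ≤ (t \ s).card := Finset.card_image_le
  have hsdiff := Finset.card_sdiff_add_card_eq_card hst
  omega

variable [DecidableEq σ]

theorem exists_card_insert_le_card_image_add (hs : s.card ≤ (s.image f).card + c)
    (ht : t.card ≤ (t.image f).card + c) (hst : s.card < t.card) :
    ∃ e ∈ t, e ∉ s ∧ (insert e s).card ≤ ((insert e s).image f).card + c := by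
  obtain hlt | heq := hs.lt_or_eq
  · obtain ⟨e, het, hes⟩ := Finset.exists_mem_notMem_of_card_lt_card hst
    have hmono : (s.image f).card ≤ ((insert e s).image f).card :=
      Finset.card_le_card (Finset.image_subset_image (Finset.subset_insert e s))
    refine ⟨e, het, hes, ?_⟩
    rw [Finset.card_insert_of_notMem hes]
    omega
  · have himage : (s.image f).card < (t.image f).card := by omega
    obtain ⟨i, hit, his⟩ := Finset.exists_mem_notMem_of_card_lt_card himage
    obtain ⟨e, het, rfl⟩ := Finset.mem_image.1 hit
    have hes : e ∉ s := fun hes => his (Finset.mem_image_of_mem f hes)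
    refine ⟨e, het, hes, ?_⟩
    rw [Finset.image_insert, Finset.card_insert_of_notMem hes, Finset.card_insert_of_notMem his]
    omega

/-- The matroid of the sets whose nullity is at most `c` in the partition matroid whose blocks are
the fibres of `f` (a set `s` has rank `#(s.image f)` in that matroid). -/
def boundedNullity (f : σ → ι) (c : ℕ) : Matroid σ :=
  (IndepMatroid.ofFinset Set.univ (fun s => s.card ≤ (s.image f).card + c)
    (Finset.card_empty.trans_le (Nat.zero_le _))
    (fun _ _ ht hst => card_le_card_image_add_of_subset hst ht)
    (fun _ _ hs ht hst => exists_card_insert_le_card_image_add hs ht hst)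
    (fun _ _ => Set.subset_univ _)).matroid

theorem boundedNullity_indep_iff :
    (boundedNullity f c).Indep ↑s ↔ s.card ≤ (s.image f).card + c := by
  simp [boundedNullity]

variable [Fintype σ]

theorem exists_indep_boundedNullity (hc : (Finset.univ.image f).card + c ≤ Fintype.card σ) :
    ∃ B : Finset σ, (boundedNullity f c).Indep ↑B ∧
      B.card = (Finset.univ.image f).card + c := by
  obtain ⟨u, -, hinj, himage⟩ := Finset.exists_subset_injOn_image_eq_of_surjOn
    (Finset.univ : Finset σ) (Finset.univ.image f) (f := f) (fun i hi => by simpa using hi)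
  have hu : u.card = (Finset.univ.image f).card := by
    rw [← himage, Finset.card_image_of_injOn hinj]
  obtain ⟨B, huB, -, hB⟩ := Finset.exists_subsuperset_card_eq (Finset.subset_univ u)
    (hu.trans_le (Nat.le_add_right _ c)) hc
  refine ⟨B, boundedNullity_indep_iff.2 ?_, hB⟩
  rw [hB, ← himage]
  gcongr

theorem eRank_boundedNullity (hc : (Finset.univ.image f).card + c ≤ Fintype.card σ) :
    (boundedNullity f c).eRank = ((Finset.univ.image f).card + c : ℕ) := by
  have hle (s : Finset σ) (hs : (boundedNullity f c).Indep ↑s) :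
      s.card ≤ (Finset.univ.image f).card + c :=
    (boundedNullity_indep_iff.1 hs).trans (by gcongr; exact Finset.subset_univ s)
  apply le_antisymm
  · obtain ⟨B, hB⟩ := (boundedNullity f c).exists_isBase
    rw [← hB.encard_eq_eRank, ← Set.coe_toFinset B, Set.encard_coe_eq_coe_finsetCard]
    exact_mod_cast hle B.toFinset (by simpa using hB.indep)
  · obtain ⟨B, hB, hcard⟩ := exists_indep_boundedNullity hc
    simpa [hcard] using hB.encard_le_eRank

end BoundedNullity

section Matching

variable {V : Type*} {G : SimpleGraph V} {M : Finset (Sym2 V)}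

theorem isMatchingSet_of_subset_edgeSet (hG : ∀ u v w, G.Adj u v → G.Adj u w → v = w)
    (hM : ∀ e ∈ M, e ∈ G.edgeSet) : IsMatchingSet G M := by
  refine ⟨hM, fun e he e' he' hne u hu hu' => hne ?_⟩
  obtain ⟨v, rfl⟩ := hu
  obtain ⟨w, rfl⟩ := hu'
  rw [hG u v w (hM _ he) (hM _ he')]

variable [Fintype V] [DecidableEq V]

theorem filter_exists_mem_eq_biUnion (M : Finset (Sym2 V)) :
    ({v | ∃ e ∈ M, v ∈ e} : Finset V) = M.biUnion Sym2.toFinset := by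
  ext v
  simp

theorem card_support_of_isMatchingSet (hM : IsMatchingSet G M) :
    Finset.card {v | ∃ e ∈ M, v ∈ e} = 2 * M.card := by
  have hdisjoint : (M : Set (Sym2 V)).PairwiseDisjoint Sym2.toFinset := by
    intro e he e' he' hne
    refine Finset.disjoint_left.2 fun v hv hv' => ?_
    rw [Sym2.mem_toFinset] at hv hv'
    exact hM.2 e he e' he' hne v hv hv'
  rw [filter_exists_mem_eq_biUnion, Finset.card_biUnion hdisjoint, Finset.sum_congr rfl
    fun e he => Sym2.card_toFinset_of_not_isDiag e (G.not_isDiag_of_mem_edgeSet (hM.1 e he)),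
    Finset.sum_const, smul_eq_mul, mul_comm]

variable {ι : Type*} [DecidableEq ι] {f : V → ι}

theorem card_image_support_le (hf : ∀ u v, G.Adj u v → f u = f v)
    (hM : ∀ e ∈ M, e ∈ G.edgeSet) :
    (Finset.image f {v | ∃ e ∈ M, v ∈ e}).card ≤ M.card := by
  rw [filter_exists_mem_eq_biUnion, Finset.biUnion_image, ← mul_one M.card]
  refine Finset.card_biUnion_le_card_mul _ _ _ fun e he => Finset.card_le_one.2 ?_
  induction e with
  | h u v =>
    simp [hf u v (hM _ he)]

variable (hAdj : ∀ u v, G.Adj u v ↔ u ≠ v ∧ f u = f v)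
  (hf : ∀ i, Finset.card {v | f v = i} ≤ 2)

include hAdj hf

omit [DecidableEq V] in
theorem eq_of_adj_of_adj (u v w : V) (huv : G.Adj u v) (huw : G.Adj u w) : v = w := by
  by_contra hvw
  rw [hAdj] at huv huw
  refine (hf (f u)).not_gt (Finset.two_lt_card.2 ⟨u, ?_, v, ?_, w, ?_, huv.1, huw.1, hvw⟩)
  · simp
  · simp [huv.2]
  · simp [huw.2]

-- With `t` the set of vertices covered by the edges inside `s`, the map `f` is at most two-to-one
-- on `t`, injective on `s \ t`, and no fibre meets both.
theorem card_le_card_image_add_card_edges (s : Finset V) :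
    s.card ≤ (s.image f).card + Finset.card {e | e ∈ G.edgeSet ∧ ∀ v ∈ e, v ∈ s} := by
  set M : Finset (Sym2 V) := {e | e ∈ G.edgeSet ∧ ∀ v ∈ e, v ∈ s}
  set t : Finset V := {v | ∃ e ∈ M, v ∈ e}
  have hts : t ⊆ s := fun v hv => by
    obtain ⟨e, he, hve⟩ := (Finset.mem_filter.1 hv).2
    exact (Finset.mem_filter.1 he).2.2 v hve
  have hmem {v w : V} (hv : v ∈ s) (hw : w ∈ s) (hvw : v ≠ w) (hfvw : f v = f w) : v ∈ t := by
    refine Finset.mem_filter.2 ⟨Finset.mem_univ v, s(v, w), ?_, Sym2.mem_mk_left v w⟩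
    simp [M, hAdj, hvw, hfvw, hv, hw]
  have hM : IsMatchingSet G M := isMatchingSet_of_subset_edgeSet (eq_of_adj_of_adj hAdj hf)
    fun e he => (Finset.mem_filter.1 he).2.1
  have hcard_t : t.card = 2 * M.card := card_support_of_isMatchingSet hM
  have himage_t : t.card ≤ 2 * (t.image f).card :=
    Finset.card_le_mul_card_image t 2 fun i _ =>
      (Finset.card_le_card (Finset.filter_subset_filter _ (Finset.subset_univ t))).trans (hf i)
  have himage_sdiff : ((s \ t).image f).card = (s \ t).card := by
    refine Finset.card_image_of_injOn fun v hv w hw hfvw => by_contra fun hvw => ?_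
    simp only [Finset.coe_sdiff, Set.mem_sdiff, Finset.mem_coe] at hv hw
    exact hv.2 (hmem hv.1 hw.1 hvw hfvw)
  have hdisjoint : Disjoint ((s \ t).image f) (t.image f) := by
    simp only [Finset.disjoint_left, Finset.mem_image, Finset.mem_sdiff]
    rintro _ ⟨v, ⟨hvs, hvt⟩, rfl⟩ ⟨w, hwt, hfvw⟩
    exact hvt (hmem hvs (hts hwt) (fun h => hvt (h ▸ hwt)) hfvw.symm)
  have hcard := Finset.card_sdiff_add_card_eq_card hts
  have hcard_image := Finset.card_union_of_disjoint hdisjoint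
  rw [← Finset.image_union, Finset.sdiff_union_of_subset hts] at hcard_image
  omega

omit [DecidableEq V] in
theorem exists_isMatchingSet_of_card_image_add_le {s : Finset V} {k : ℕ}
    (hs : (s.image f).card + k ≤ s.card) :
    ∃ M, IsMatchingSet G M ∧ M.card = k ∧ ∀ e ∈ M, ∀ v ∈ e, v ∈ s := by
  classical
  have hle := hs.trans (card_le_card_image_add_card_edges hAdj hf s)
  obtain ⟨M, hM, hcard⟩ := Finset.exists_subset_card_eq (Nat.le_of_add_le_add_left hle)
  have hedge (e : Sym2 V) (he : e ∈ M) := (Finset.mem_filter.1 (hM he)).2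
  exact ⟨M, isMatchingSet_of_subset_edgeSet (eq_of_adj_of_adj hAdj hf) fun e he => (hedge e he).1,
    hcard, fun e he => (hedge e he).2⟩

end Matching

section EdgeIdeal

variable {K : Type*} [Field K] {n : ℕ} {G : SimpleGraph (Fin n)} {ι : Type*} [DecidableEq ι]
  {f : Fin n → ι}

theorem edgeIdealSqPow_eq_stanleyReisnerIdeal (hAdj : ∀ u v, G.Adj u v ↔ u ≠ v ∧ f u = f v)
    (hf : ∀ i, Finset.card {v | f v = i} ≤ 2) (k : ℕ) :
    edgeIdealSqPow K G k = stanleyReisnerIdeal K {s | s.card < (s.image f).card + k} := by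
  apply le_antisymm <;> refine Ideal.span_le.2 ?_
  · rintro _ ⟨M, hM, rfl, rfl⟩
    refine prod_X_mem_stanleyReisnerIdeal fun hlt => ?_
    rw [Set.mem_ofPred_eq, card_support_of_isMatchingSet hM] at hlt
    have := card_image_support_le (fun u v huv => ((hAdj u v).1 huv).2) hM.1
    omega
  · rintro _ ⟨s, hs, rfl⟩
    obtain ⟨M, hM, hcard, hMs⟩ :=
      exists_isMatchingSet_of_card_image_add_le hAdj hf (not_lt.1 hs)
    have hsubset : ({v | ∃ e ∈ M, v ∈ e} : Finset (Fin n)) ⊆ s := fun v hv => by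
      obtain ⟨e, he, hve⟩ := (Finset.mem_filter.1 hv).2
      exact hMs e he v hve
    exact Ideal.mem_of_dvd _ (Finset.prod_dvd_prod_of_subset _ _ _ hsubset)
      (Ideal.subset_span ⟨M, hM, hcard, rfl⟩)

theorem depthQuot_edgeIdealSqPow_succ (hAdj : ∀ u v, G.Adj u v ↔ u ≠ v ∧ f u = f v)
    (hf : ∀ i, Finset.card {v | f v = i} ≤ 2) {c : ℕ} (hc : (Finset.univ.image f).card + c ≤ n) :
    depthQuot (edgeIdealSqPow K G (c + 1)) = (Finset.univ.image f).card + c := by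
  have hfaces : {s : Finset (Fin n) | s.card < (s.image f).card + (c + 1)} =
      {s : Finset (Fin n) | (boundedNullity f c).Indep ↑s} := by
    simp only [boundedNullity_indep_iff, ← add_assoc, Nat.lt_succ_iff]
  rw [edgeIdealSqPow_eq_stanleyReisnerIdeal hAdj hf, hfaces]
  exact depthQuot_stanleyReisnerIdeal_indep
    (eRank_boundedNullity (hc.trans_eq (Fintype.card_fin n).symm))

end EdgeIdeal

theorem card_filter_val_div_two_le {n : ℕ} (m : ℕ) :
    Finset.card {v : Fin n | (v : ℕ) / 2 = m} ≤ 2 := by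
  have hmaps : ∀ v ∈ ({v : Fin n | (v : ℕ) / 2 = m} : Finset (Fin n)),
      (v : ℕ) ∈ Finset.Ico (2 * m) (2 * m + 2) := fun v hv => by
    have := (Finset.mem_filter.1 hv).2
    rw [Finset.mem_Ico]
    omega
  simpa using Finset.card_le_card_of_injOn _ hmaps Fin.val_injective.injOn

theorem card_image_val_div_two {n : ℕ} (hn : Even n) :
    (Finset.univ.image fun v : Fin n => (v : ℕ) / 2).card = n / 2 := by
  obtain ⟨m, rfl⟩ := hn
  have himage : Finset.univ.image (fun v : Fin (m + m) => (v : ℕ) / 2) = Finset.range m := by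
    ext i
    simp only [Finset.mem_image, Finset.mem_univ, true_and, Finset.mem_range]
    exact ⟨fun ⟨v, hv⟩ => by omega,
      fun hi => ⟨⟨2 * i, by omega⟩, Nat.mul_div_cancel_left i two_pos⟩⟩
  rw [himage, Finset.card_range]
  omega

/-- `G` is a disjoint union of edges and isolated vertices, and its connected components are the
nonempty fibres of `f`. -/
theorem stmt_18_general (K : Type*) [Field K] {n : ℕ} (G : SimpleGraph (Fin n))
    {ι : Type*} [DecidableEq ι] (f : Fin n → ι) (hf : ∀ i, Finset.card {v | f v = i} ≤ 2)
    (hAdj : ∀ u v, G.Adj u v ↔ u ≠ v ∧ f u = f v) (k : ℕ) (hk : 1 ≤ k)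
    (hkn : (Finset.univ.image f).card + k ≤ n + 1) :
    gEdge K G k = (Finset.univ.image f).card - k := by
  obtain ⟨c, rfl⟩ := Nat.exists_eq_add_of_le' hk
  rw [gEdge, depthQuot_edgeIdealSqPow_succ hAdj hf (by omega)]
  push_cast
  ring

/-- If `G` is the perfect matching graph whose edge ideal is the complete intersection
`(x_1x_2, x_3x_4, …, x_{n-1}x_n)` (vertices `2m` and `2m+1` of `Fin n` are joined,
`n` even), then `g_{I(G)}(k) = n/2 - k` for all `1 ≤ k ≤ n/2`. -/
theorem stmt_18 (K : Type*) [Field K] {n : ℕ} (hn : Even n)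
    (G : SimpleGraph (Fin n))
    (hAdj : ∀ i j : Fin n, G.Adj i j ↔ (i ≠ j ∧ (i : ℕ) / 2 = (j : ℕ) / 2))
    (k : ℕ) (h1 : 1 ≤ k) (h2 : k ≤ n / 2) :
    gEdge K G k = (n / 2 : ℤ) - k := by
  have hcard := card_image_val_div_two hn
  rw [stmt_18_general K G (fun v => (v : ℕ) / 2) card_filter_val_div_two_le hAdj k h1 (by omega),
    hcard, Int.natCast_div, Nat.cast_ofNat]

end
end
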